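/- arXiv:2512.16283 — 7 statements merged into one kernel-verified Lean document; each statement's English description precedes it below -/
import Mathlib

section
/- For every real number σ > 2 there exists a constant c(σ) > 1 such that for all real numbers x, y with c(σ) ≤ y ≤ x one has ln^σ(x + y) − ln^σ(x) − (1/2)·ln^σ(y) ≤ 0. -/
/-!
Where `t > 1` and `t ≥ exp (σ - 1)`, the function `log t ^ (σ - 1) / t` is decreasing. Up to the
factor `σ` it is the derivative of `log t ^ σ`, so for large `y ≤ x` the increment of `log ^ σ` over
`[x, x + y]` is at most `y` times `|σ| * log y ^ (σ - 1) / y`. The resulting bound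
`|σ| * log y ^ (σ - 1)` is one power of `log y` short of `log y ^ σ`.
-/

open Set

section LogRpow

variable {σ x y z : ℝ}

theorem antitoneOn_log_rpow_div_self (p : ℝ) :
    AntitoneOn (fun t : ℝ ↦ Real.log t ^ p / t) (Ioi 1 ∩ Ici (Real.exp p)) := by
  rintro x ⟨hx, hpx⟩ y ⟨hy, hpy⟩ hxy
  have hx₀ : 0 < x := zero_lt_one.trans hx
  have hlogx : 0 < Real.log x := Real.log_pos hx
  have hlogy : 0 < Real.log y := Real.log_pos hy
  rcases le_or_gt p 0 with hp | hp
  · have hlog : Real.log y ^ p ≤ Real.log x ^ p :=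
      Real.rpow_le_rpow_of_nonpos hlogx (Real.log_le_log hx₀ hxy) hp
    exact div_le_div₀ (by positivity) hlog hx₀ hxy
  · have rpow_quotient {t : ℝ} (ht : 1 < t) :
        (Real.log t / t ^ p⁻¹) ^ p = Real.log t ^ p / t := by
      have ht₀ : 0 ≤ t := (zero_lt_one.trans ht).le
      rw [Real.div_rpow (Real.log_pos ht).le (by positivity), Real.rpow_inv_rpow ht₀ hp.ne']
    have hquot : Real.log y / y ^ p⁻¹ ≤ Real.log x / x ^ p⁻¹ :=
      Real.log_div_self_rpow_antitoneOn (inv_pos.2 hp) (by simpa using hpx)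
        (by simpa using hpy) hxy
    have hy₀ : 0 < y := zero_lt_one.trans hy
    simpa only [rpow_quotient hx, rpow_quotient hy] using
      Real.rpow_le_rpow (by positivity) hquot hp.le

theorem hasDerivAt_log_rpow (σ : ℝ) (hx : 1 < x) :
    HasDerivAt (fun t ↦ Real.log t ^ σ) (σ * (Real.log x ^ (σ - 1) / x)) x := by
  convert (Real.hasDerivAt_log (zero_lt_one.trans hx).ne').rpow_const (p := σ)
    (.inl (Real.log_pos hx).ne') using 1
  ring

theorem log_rpow_sub_log_rpow_le (hx : 1 < x) (hσx : Real.exp (σ - 1) ≤ x) (hxz : x ≤ z) :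
    Real.log z ^ σ - Real.log x ^ σ ≤ |σ| * (Real.log x ^ (σ - 1) / x) * (z - x) := by
  have hderiv : ∀ t ∈ Icc x z,
      HasDerivAt (fun t ↦ Real.log t ^ σ) (σ * (Real.log t ^ (σ - 1) / t)) t :=
    fun t ht ↦ hasDerivAt_log_rpow σ (hx.trans_le ht.1)
  refine (convex_Icc x z).image_sub_le_mul_sub_of_deriv_le
    (fun t ht ↦ (hderiv t ht).continuousAt.continuousWithinAt)
    (fun t ht ↦ (hderiv t (interior_subset ht)).differentiableAt.differentiableWithinAt)
    (fun t ht ↦ ?_) x (left_mem_Icc.2 hxz) z (right_mem_Icc.2 hxz) hxz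
  have htI : t ∈ Icc x z := interior_subset ht
  have ht₁ : 1 < t := hx.trans_le htI.1
  have hquot : 0 ≤ Real.log t ^ (σ - 1) / t :=
    div_nonneg (Real.rpow_nonneg (Real.log_pos ht₁).le _) (zero_lt_one.trans ht₁).le
  calc deriv (fun t ↦ Real.log t ^ σ) t
      = σ * (Real.log t ^ (σ - 1) / t) := (hderiv t htI).deriv
    _ ≤ |σ| * (Real.log t ^ (σ - 1) / t) :=
        mul_le_mul_of_nonneg_right (le_abs_self σ) hquot
    _ ≤ |σ| * (Real.log x ^ (σ - 1) / x) :=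
        mul_le_mul_of_nonneg_left
          (antitoneOn_log_rpow_div_self (σ - 1) ⟨hx, hσx⟩ ⟨ht₁, hσx.trans htI.1⟩ htI.1)
          (abs_nonneg σ)

theorem log_add_rpow_sub_log_rpow_le (hy : 1 < y) (hσy : Real.exp (σ - 1) ≤ y) (hyx : y ≤ x) :
    Real.log (x + y) ^ σ - Real.log x ^ σ ≤ |σ| * Real.log y ^ (σ - 1) := by
  have hy₀ : 0 < y := zero_lt_one.trans hy
  have hx : 1 < x := hy.trans_le hyx
  have hσx : Real.exp (σ - 1) ≤ x := hσy.trans hyx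
  have hanti : Real.log x ^ (σ - 1) / x ≤ Real.log y ^ (σ - 1) / y :=
    antitoneOn_log_rpow_div_self (σ - 1) ⟨hy, hσy⟩ ⟨hx, hσx⟩ hyx
  calc Real.log (x + y) ^ σ - Real.log x ^ σ
      ≤ |σ| * (Real.log x ^ (σ - 1) / x) * (x + y - x) :=
        log_rpow_sub_log_rpow_le hx hσx (le_add_of_nonneg_right hy₀.le)
    _ = |σ| * (Real.log x ^ (σ - 1) / x) * y := by rw [add_sub_cancel_left]
    _ ≤ |σ| * (Real.log y ^ (σ - 1) / y) * y := by gcongr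
    _ = |σ| * Real.log y ^ (σ - 1) := by field_simp

end LogRpow

theorem full_dim_KAM_stmt0_general (σ : ℝ) {ε : ℝ} (hε : 0 < ε) :
    ∃ c : ℝ, 1 < c ∧ ∀ x y : ℝ, c ≤ y → y ≤ x →
      Real.log (x + y) ^ σ - Real.log x ^ σ - ε * Real.log y ^ σ ≤ 0 := by
  have hquot : 0 ≤ |σ| / ε := by positivity
  have hexponent : 0 < 1 + |σ| + |σ| / ε := by positivity
  refine ⟨Real.exp (1 + |σ| + |σ| / ε), Real.one_lt_exp_iff.2 hexponent, fun x y hcy hyx ↦ ?_⟩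
  have hy : 1 < y := (Real.one_lt_exp_iff.2 hexponent).trans_le hcy
  have hσy : Real.exp (σ - 1) ≤ y :=
    (Real.exp_le_exp.2 (by linarith [le_abs_self σ])).trans hcy
  have hlog : 0 < Real.log y := Real.log_pos hy
  have hσlog : |σ| ≤ ε * Real.log y := by
    rw [← div_le_iff₀' hε]
    linarith [(Real.le_log_iff_exp_le (zero_lt_one.trans hy)).2 hcy, abs_nonneg σ]
  rw [sub_nonpos]
  calc Real.log (x + y) ^ σ - Real.log x ^ σ
      ≤ |σ| * Real.log y ^ (σ - 1) := log_add_rpow_sub_log_rpow_le hy hσy hyx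
    _ ≤ ε * Real.log y * Real.log y ^ (σ - 1) := by gcongr
    _ = ε * Real.log y ^ σ := by rw [Real.rpow_sub_one hlog.ne']; field_simp

/-- Lemma 5.1 of the paper. For every real `σ > 2` there is a constant
`c(σ) > 1` such that `ln^σ(x+y) - ln^σ(x) - (1/2)·ln^σ(y) ≤ 0` whenever `c(σ) ≤ y ≤ x`,
where `ln^σ t = (Real.log t) ^ σ` (real exponent). -/
theorem full_dim_KAM_stmt0 (σ : ℝ) (hσ : 2 < σ) :
    ∃ c : ℝ, 1 < c ∧ ∀ x y : ℝ, c ≤ y → y ≤ x →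
      Real.log (x + y) ^ σ - Real.log x ^ σ - (1 / 2) * Real.log y ^ σ ≤ 0 :=
  full_dim_KAM_stmt0_general σ one_half_pos
end

section
/- Let σ > 2, and let a, k, k' : ℤ → ℕ be finitely supported functions, not all zero. Let (n_i*)_{i≥1} be the decreasing rearrangement of the finite multiset in which each |n| (n ∈ ℤ) is repeated 2a_n + k_n + k'_n times. Then Σ_{n∈ℤ} (2a_n + k_n + k'_n)·ln^σ⌊n⌋ − 2·ln^σ⌊n₁*⌋ + ln^σ⌊m*(k,k')⌋ ≥ (1/2)·Σ_{i≥3} ln^σ⌊n_i*⌋, where Σ_{i≥3} denotes the sum over all entries of the multiset except its two largest. -/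
/-- `ln^σ⌊n⌋` for an integer `n`, where `⌊n⌋ = max{c, |n|}`. -/
noncomputable def lnZ (c σ : ℝ) (n : ℤ) : ℝ := Real.log (max c |(n : ℝ)|) ^ σ

/-- `ln^σ⌊m⌋` for a natural number `m`, where `⌊m⌋ = max{c, m}`. -/
noncomputable def lnN (c σ : ℝ) (m : ℕ) : ℝ := Real.log (max c (m : ℝ)) ^ σ

/-- The finite multiset in which each `|n|` (`n ∈ ℤ`) is repeated `2aₙ + kₙ + k'ₙ` times. -/
def reps (a k k' : ℤ →₀ ℕ) : Multiset ℕ :=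
  (a.support ∪ k.support ∪ k'.support).val.bind
    (fun n => Multiset.replicate (2 * a n + k n + k' n) n.natAbs)

/-- The decreasing rearrangement `(n₁*, n₂*, …)` of a finite multiset of naturals. -/
def descList (M : Multiset ℕ) : List ℕ := (M.sort (· ≤ ·)).reverse

/-- The momentum `m(k,k') = ∑ₙ (kₙ - k'ₙ)·n` of finitely supported `k, k' : ℤ → ℕ`. -/
def momentum (k k' : ℤ →₀ ℕ) : ℤ :=
  ∑ n ∈ k.support ∪ k'.support, ((k n : ℤ) - (k' n : ℤ)) * n

/-!
Distribute signs over the entries of the multiset: the pairs counted by `2aₙ` contribute `n` and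
`-n`, the entries counted by `kₙ` contribute `n`, and those counted by `k'ₙ` contribute `-n`. The
resulting multiset of integers has sum `m(k,k')`, so the triangle inequality gives
`n₁* ≤ m* + ∑_{i≥2} nᵢ*`. Now let `f ≥ 0` be nondecreasing with `f(x + y) ≤ f(x) + θ f(y)` for
`y ≤ x`, where `θ ≤ 1`. Apply `f` to this bound and peel off `n₃*, n₄*, …` one at a time: each is
at most `m* + n₂*`, hence costs only `θ f(nᵢ*)` instead of `f(nᵢ*)`, and the savings
`(1 - θ) f(nᵢ*)` add up to the claim. The paper's case is `f = ln^σ⌊·⌋`, `θ = 1/2`.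
-/

section Subadditive

variable {α R : Type*} [AddCommMonoid α] [LinearOrder α]
  [CommRing R] [LinearOrder R] [IsStrictOrderedRing R] {f : α → R} {θ : R}

theorem map_add_le_of_le_one (hθ : θ ≤ 1) (hf_nonneg : ∀ x, 0 ≤ f x)
    (hsub : ∀ x y, y ≤ x → f (x + y) ≤ f x + θ * f y) (x y : α) : f (x + y) ≤ f x + f y := by
  wlog hyx : y ≤ x generalizing x y
  · rw [add_comm x, add_comm (f x)]
    exact this y x (le_of_not_ge hyx)
  · exact (hsub x y hyx).trans (by gcongr; exact mul_le_of_le_one_left (hf_nonneg y) hθ)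

variable [CanonicallyOrderedAdd α]

theorem map_add_list_sum_le (hsub : ∀ x y, y ≤ x → f (x + y) ≤ f x + θ * f y) (l : List α) :
    ∀ x, (∀ y ∈ l, y ≤ x) → f (x + l.sum) ≤ f x + θ * (l.map f).sum := by
  induction l with
  | nil => simp
  | cons y l ih =>
    intro x hx
    obtain ⟨hyx, hlx⟩ := List.forall_mem_cons.1 hx
    calc f (x + (y :: l).sum)
      _ = f (x + y + l.sum) := by rw [List.sum_cons, add_assoc]
      _ ≤ f (x + y) + θ * (l.map f).sum := ih _ fun z hz ↦ (hlx z hz).trans le_self_add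
      _ ≤ f x + θ * f y + θ * (l.map f).sum := by gcongr; exact hsub x y hyx
      _ = f x + θ * ((y :: l).map f).sum := by rw [List.map_cons, List.sum_cons]; ring

theorem map_add_sum_add_mul_sum_map_tail_le (hθ : θ ≤ 1) (hf_nonneg : ∀ x, 0 ≤ f x)
    (hsub : ∀ x y, y ≤ x → f (x + y) ≤ f x + θ * f y) {t : List α} (ht : t.Pairwise (· ≥ ·))
    (m : α) : f (m + t.sum) + (1 - θ) * (t.tail.map f).sum ≤ f m + (t.map f).sum := by
  cases t with
  | nil => simp
  | cons y l =>
    have hly : ∀ z ∈ l, z ≤ m + y := fun z hz ↦ (List.rel_of_pairwise_cons ht hz).trans le_add_self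
    have htail := map_add_list_sum_le hsub l (m + y) hly
    have hhead := map_add_le_of_le_one hθ hf_nonneg hsub m y
    rw [List.tail_cons, List.map_cons, List.sum_cons, List.sum_cons, ← add_assoc m]
    linarith

end Subadditive

theorem natAbs_multiset_sum_le (s : Multiset ℤ) : s.sum.natAbs ≤ (s.map Int.natAbs).sum :=
  Multiset.le_sum_of_subadditive Int.natAbs Int.natAbs_zero.le Int.natAbs_add_le s

theorem le_natAbs_sum_add_sum_of_map_natAbs_eq_cons {s : Multiset ℤ} {x : ℕ} {t : Multiset ℕ}
    (hs : s.map Int.natAbs = x ::ₘ t) : x ≤ s.sum.natAbs + t.sum := by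
  obtain ⟨z, hz, rfl, rfl⟩ := Multiset.map_eq_cons .. |>.2 hs
  have hsum : z = s.sum - (s.erase z).sum := by rw [← Multiset.sum_erase hz]; ring
  calc z.natAbs
    _ = (s.sum - (s.erase z).sum).natAbs := by rw [← hsum]
    _ ≤ s.sum.natAbs + (s.erase z).sum.natAbs := Int.natAbs_sub_le _ _
    _ ≤ s.sum.natAbs + ((s.erase z).map Int.natAbs).sum := by
      gcongr; exact natAbs_multiset_sum_le _

section Reps

variable (a k k' : ℤ →₀ ℕ)

/-- A choice of signs for the entries of `reps a k k'`: the `2aₙ` copies of `|n|` are split evenly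
between `n` and `-n`, the `kₙ` copies become `n` and the `k'ₙ` copies become `-n`, so that the total
is the momentum `m(k,k')`. -/
def signedReps : Multiset ℤ :=
  (a.support ∪ k.support ∪ k'.support).val.bind fun n ↦
    .replicate (a n) n + .replicate (a n) (-n) + .replicate (k n) n + .replicate (k' n) (-n)

theorem map_natAbs_signedReps : (signedReps a k k').map Int.natAbs = reps a k k' := by
  simp only [signedReps, reps, Multiset.map_bind, Multiset.map_add, Multiset.map_replicate,
    Int.natAbs_neg, ← Multiset.replicate_add, two_mul]

theorem sum_signedReps : (signedReps a k k').sum = momentum k k' := by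
  have hsub : k.support ∪ k'.support ⊆ a.support ∪ k.support ∪ k'.support := by
    rw [Finset.union_assoc]
    exact Finset.subset_union_right
  calc (signedReps a k k').sum
    _ = ∑ n ∈ a.support ∪ k.support ∪ k'.support, ((k n : ℤ) - k' n) * n := by
      rw [signedReps, Multiset.sum_bind]
      refine Finset.sum_congr rfl fun n _ ↦ ?_
      simp only [Multiset.sum_add, Multiset.sum_replicate, nsmul_eq_mul]
      ring
    _ = momentum k k' := by
      refine (Finset.sum_subset hsub fun n _ hn ↦ ?_).symm
      simp only [Finset.mem_union, Finsupp.mem_support_iff, not_or, not_not] at hn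
      simp [hn]

theorem sum_map_reps {R : Type*} [NonAssocSemiring R] (f : ℕ → R) :
    ((reps a k k').map f).sum =
      ∑ n ∈ a.support ∪ k.support ∪ k'.support, ((2 * a n + k n + k' n : ℕ) : R) * f n.natAbs := by
  simp only [reps, Multiset.map_bind, Multiset.sum_bind, Multiset.map_replicate,
    Multiset.sum_replicate, nsmul_eq_mul]
  rfl

variable {a k k'}

theorem natAbs_mem_reps {n : ℤ} (hn : 2 * a n + k n + k' n ≠ 0) : n.natAbs ∈ reps a k k' := by
  have hsupp : n ∈ a.support ∪ k.support ∪ k'.support := by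
    simp only [Finset.mem_union, Finsupp.mem_support_iff]
    omega
  exact Multiset.mem_bind.2 ⟨n, hsupp, Multiset.mem_replicate.2 ⟨hn, rfl⟩⟩

theorem reps_eq_zero_iff : reps a k k' = 0 ↔ a = 0 ∧ k = 0 ∧ k' = 0 := by
  constructor
  · intro h
    have hmult (n : ℤ) : 2 * a n + k n + k' n = 0 := by
      by_contra hn
      exact Multiset.notMem_zero _ (h ▸ natAbs_mem_reps hn)
    simp only [Finsupp.ext_iff, Finsupp.coe_zero, Pi.zero_apply, ← forall_and]
    intro n
    have := hmult n
    omega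
  · rintro ⟨rfl, rfl, rfl⟩
    rfl

end Reps

theorem coe_descList (M : Multiset ℕ) : (descList M : Multiset ℕ) = M := by
  rw [descList, Multiset.coe_reverse, Multiset.sort_eq]

theorem pairwise_ge_descList (M : Multiset ℕ) : (descList M).Pairwise (· ≥ ·) :=
  List.pairwise_reverse.2 (Multiset.pairwise_sort M (· ≤ ·))

theorem full_dim_KAM_stmt2_general {R : Type*} [CommRing R] [LinearOrder R] [IsStrictOrderedRing R]
    {f : ℕ → R} {θ : R} (hθ : θ ≤ 1) (hf_nonneg : ∀ x, 0 ≤ f x) (hmono : Monotone f)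
    (hsub : ∀ x y, y ≤ x → f (x + y) ≤ f x + θ * f y)
    (a k k' : ℤ →₀ ℕ) (hne : ¬(a = 0 ∧ k = 0 ∧ k' = 0)) :
    (∑ n ∈ a.support ∪ k.support ∪ k'.support, ((2 * a n + k n + k' n : ℕ) : R) * f n.natAbs)
      - 2 * f (descList (reps a k k')).headI + f (momentum k k').natAbs
    ≥ (1 - θ) * (((descList (reps a k k')).drop 2).map f).sum := by
  have hcoe := coe_descList (reps a k k')
  have hdesc := pairwise_ge_descList (reps a k k')
  rw [← sum_map_reps, ← hcoe, Multiset.map_coe, Multiset.sum_coe, hcoe]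
  match descList (reps a k k'), hcoe, hdesc with
  | [], hcoe, _ => exact absurd (reps_eq_zero_iff.1 hcoe.symm) hne
  | x :: t, hcoe, hdesc =>
    have hx : x ≤ (momentum k k').natAbs + t.sum := by
      rw [← sum_signedReps a, ← Multiset.sum_coe]
      exact le_natAbs_sum_add_sum_of_map_natAbs_eq_cons
        ((map_natAbs_signedReps a k k').trans hcoe.symm)
    have ht := map_add_sum_add_mul_sum_map_tail_le hθ hf_nonneg hsub hdesc.of_cons
      (momentum k k').natAbs
    have hfx := hmono hx
    rw [List.map_cons, List.sum_cons, List.headI_cons, List.drop_succ_cons, List.drop_one]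
    linarith

section LogPower

variable {c σ : ℝ}

theorem lnZ_eq_lnN_natAbs (n : ℤ) : lnZ c σ n = lnN c σ n.natAbs := by
  rw [lnZ, lnN, Nat.cast_natAbs, Int.cast_abs]

theorem monotoneOn_log_rpow (hσ : 0 ≤ σ) : MonotoneOn (fun x ↦ Real.log x ^ σ) (Set.Ici 1) :=
  fun _ hx _ _ hxy ↦ Real.rpow_le_rpow (Real.log_nonneg hx)
    (Real.log_le_log (one_pos.trans_le hx) hxy) hσ

theorem lnN_nonneg (hc : 1 ≤ c) (m : ℕ) : 0 ≤ lnN c σ m :=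
  Real.rpow_nonneg (Real.log_nonneg (le_max_of_le_left hc)) σ

theorem monotone_lnN (hσ : 0 ≤ σ) (hc : 1 ≤ c) : Monotone (lnN c σ) := fun _ _ hmn ↦
  monotoneOn_log_rpow hσ (le_max_of_le_left hc) (le_max_of_le_left hc)
    (max_le_max_left c (Nat.cast_le.2 hmn))

theorem lnN_add_le (hσ : 0 ≤ σ) (hc : 1 ≤ c) {θ : ℝ}
    (hsub : ∀ x y : ℝ, c ≤ y → y ≤ x → Real.log (x + y) ^ σ ≤ Real.log x ^ σ + θ * Real.log y ^ σ)
    (x y : ℕ) (hyx : y ≤ x) : lnN c σ (x + y) ≤ lnN c σ x + θ * lnN c σ y := by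
  have hmax : max c ((x + y : ℕ) : ℝ) ≤ max c x + max c y := by
    rw [Nat.cast_add]
    exact max_le ((le_max_left c x).trans (le_add_of_nonneg_right (by positivity)))
      (add_le_add (le_max_right c x) (le_max_right c y))
  have hone : 1 ≤ max c ((x + y : ℕ) : ℝ) := le_max_of_le_left hc
  calc lnN c σ (x + y)
    _ ≤ Real.log (max c x + max c y) ^ σ := monotoneOn_log_rpow hσ hone (hone.trans hmax) hmax
    _ ≤ lnN c σ x + θ * lnN c σ y :=
      hsub _ _ (le_max_left c y) (max_le_max_left c (Nat.cast_le.2 hyx))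

end LogPower

/-- Lemma 2.1 of the paper. With `(nᵢ*)` the decreasing rearrangement of the
multiset in which each `|n|` is repeated `2aₙ + kₙ + k'ₙ` times,
`∑ₙ (2aₙ + kₙ + k'ₙ)·ln^σ⌊n⌋ − 2·ln^σ⌊n₁*⌋ + ln^σ⌊m*(k,k')⌋ ≥ (1/2)·∑_{i≥3} ln^σ⌊nᵢ*⌋`. -/
theorem full_dim_KAM_stmt2 (σ : ℝ) (hσ : 2 < σ) (c : ℝ) (hc : Real.exp 1 ≤ c)
    (hsub : ∀ x y : ℝ, c ≤ y → y ≤ x →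
      Real.log (x + y) ^ σ ≤ Real.log x ^ σ + (1 / 2) * Real.log y ^ σ)
    (a k k' : ℤ →₀ ℕ) (hne : ¬(a = 0 ∧ k = 0 ∧ k' = 0)) :
    (∑ n ∈ a.support ∪ k.support ∪ k'.support,
        ((2 * a n + k n + k' n : ℕ) : ℝ) * lnZ c σ n)
      - 2 * lnN c σ (descList (reps a k k')).headI
      + lnN c σ (momentum k k').natAbs
    ≥ (1 / 2) * (((descList (reps a k k')).drop 2).map (lnN c σ)).sum := by
  have hc' : 1 ≤ c := (Real.one_le_exp zero_le_one).trans hc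
  have hσ' : 0 ≤ σ := zero_le_two.trans hσ.le
  simpa only [lnZ_eq_lnN_natAbs, sub_half] using full_dim_KAM_stmt2_general one_half_lt_one.le
    (lnN_nonneg hc') (monotone_lnN hσ' hc') (lnN_add_le hσ' hc' hsub) a k k' hne
end

section
/- Let σ > 2. Let a, k, k' : ℤ → ℕ be finitely supported and not all zero, let Ṽ : ℤ → ℝ satisfy |Ṽ_n| ≤ 2 for all n, and assume |Σ_{n∈ℤ} (k_n − k'_n)(n² + Ṽ_n)| ≤ 1. Let (n_i*)_{i≥1} be the decreasing rearrangement of the finite multiset in which each |n| (n ∈ ℤ) is repeated 2a_n + k_n + k'_n times. Then Σ_{n∈ℤ} |k_n − k'_n|·ln^σ⌊n⌋ ≤ 6·4^σ·( Σ_{n∈ℤ} (2a_n + k_n + k'_n)·ln^σ⌊n⌋ − 2·ln^σ⌊n₁*⌋ + 2·ln^σ⌊m*(k,k')⌋ ). -/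
/-!
Let `W` be the multiset in which `n` occurs `2aₙ + kₙ + k'ₙ` times, let `B ≤ W` be the one in which
`n` occurs `|kₙ - k'ₙ|` times, and write `F t = ln^σ (max c t)`. Two entries `u`, `v` of `B`
contribute `±u ± v` to the momentum and `±u² ± v²` to the energy. For equal signs
`2|u| ≤ |u + v| + (u² + v²)`, and for opposite signs `u ≠ v` gives
`2|u| ≤ |u - v| + |u² - v²|`; either way `u` is controlled by the momentum and by the squares of the
other entries, and squaring costs a factor `2 ^ σ` after taking `F`. Hence deleting any two entries
`x`, `z` from `B` decreases `∑ F` at most by a constant factor, up to the momentum term.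

On the right-hand side, momentum conservation bounds `|n₁*|` by the momentum plus the sum of the
remaining absolute values. The inequality `F (x + y) ≤ F x + F y / 2` makes all of these except the
largest, `z`, count with half their weight, so subtracting `2 F n₁*` still leaves half of the
weight of `W` without its two largest entries.
-/

section Weights

/-- A nonnegative monotone weight for which the smaller of two summands counts only half. Powers of
the logarithm, truncated near `0`, are the example that matters: see `isHalfSubadditive_logWeight`.
Arguments of either sign are allowed, which truncated weights make harmless. -/
structure IsHalfSubadditive (F : ℝ → ℝ) : Prop where
  nonneg : ∀ t, 0 ≤ F t
  mono : Monotone F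
  add_le_of_le : ∀ {x y}, y ≤ x → F (x + y) ≤ F x + 1 / 2 * F y

theorem IsHalfSubadditive.add_le {F : ℝ → ℝ} (hF : IsHalfSubadditive F) (x y : ℝ) :
    F (x + y) ≤ F x + F y := by
  have hx := hF.nonneg x
  have hy := hF.nonneg y
  rcases le_total y x with h | h
  · linarith [hF.add_le_of_le h]
  · rw [add_comm x y]
    linarith [hF.add_le_of_le h]

/-- The weight `ln^σ (max c t)`, of which `lnZ` and `lnN` are the restrictions to `|n|` and to
natural numbers. -/
noncomputable def logWeight (c σ t : ℝ) : ℝ := Real.log (max c t) ^ σ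

variable {c σ : ℝ}

theorem lnZ_eq_logWeight (c σ : ℝ) (n : ℤ) : lnZ c σ n = logWeight c σ |(n : ℝ)| := rfl

theorem lnN_natAbs_eq_logWeight (c σ : ℝ) (n : ℤ) :
    lnN c σ n.natAbs = logWeight c σ |(n : ℝ)| := by
  rw [lnN, logWeight, Nat.cast_natAbs, Int.cast_abs]

theorem logWeight_nonneg (hc : 1 ≤ c) (σ t : ℝ) : 0 ≤ logWeight c σ t :=
  Real.rpow_nonneg (Real.log_nonneg (hc.trans (le_max_left c t))) σ

theorem log_rpow_le_log_rpow (hσ : 0 ≤ σ) {s t : ℝ} (hs : 1 ≤ s) (hst : s ≤ t) :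
    Real.log s ^ σ ≤ Real.log t ^ σ :=
  Real.rpow_le_rpow (Real.log_nonneg hs) (Real.log_le_log (by linarith) hst) hσ

theorem monotone_logWeight (hσ : 0 ≤ σ) (hc : 1 ≤ c) : Monotone (logWeight c σ) := fun _ _ hst =>
  log_rpow_le_log_rpow hσ (hc.trans (le_max_left _ _)) (max_le_max_left c hst)

theorem isHalfSubadditive_logWeight (hσ : 0 ≤ σ) (hc : 1 ≤ c)
    (hsub : ∀ x y : ℝ, c ≤ y → y ≤ x →
      Real.log (x + y) ^ σ ≤ Real.log x ^ σ + (1 / 2) * Real.log y ^ σ) :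
    IsHalfSubadditive (logWeight c σ) where
  nonneg := logWeight_nonneg hc σ
  mono := monotone_logWeight hσ hc
  add_le_of_le {x y} hyx := by
    have hmax : max c (x + y) ≤ max c x + max c y :=
      max_le (by linarith [le_max_left c x, le_max_left c y])
        (add_le_add (le_max_right c x) (le_max_right c y))
    exact (log_rpow_le_log_rpow hσ (hc.trans (le_max_left _ _)) hmax).trans
      (hsub _ _ (le_max_left c y) (max_le_max_left c hyx))

theorem logWeight_max_sq (hc : 1 ≤ c) (σ t : ℝ) :
    logWeight c σ (max c t ^ 2) = 2 ^ σ * logWeight c σ t := by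
  have hct : c ≤ max c t := le_max_left c t
  have hsq : c ≤ max c t ^ 2 := hct.trans (le_self_pow₀ (hc.trans hct) two_ne_zero)
  rw [logWeight, logWeight, max_eq_right hsq, Real.log_pow, Nat.cast_ofNat,
    Real.mul_rpow zero_le_two (Real.log_nonneg (hc.trans hct))]

theorem logWeight_max_two_sq_le (hσ : 0 ≤ σ) (hc : 2 ≤ c) (t : ℝ) :
    logWeight c σ (max 2 t ^ 2) ≤ 2 ^ σ * logWeight c σ t := by
  have hc1 : 1 ≤ c := one_le_two.trans hc
  rw [← logWeight_max_sq hc1]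
  apply monotone_logWeight hσ hc1
  gcongr

end Weights

section MultisetSums

/-- The sum of `F |n|` over the entries `n` of a finite multiset of integers. -/
noncomputable def absSum (F : ℝ → ℝ) (S : Multiset ℤ) : ℝ :=
  (S.map fun n : ℤ => F |(n : ℝ)|).sum

/-- The sum of `g n`, taken with sign `ε n`, over the entries `n` of a finite multiset of integers.
It is the momentum for `g n = n` and the energy for `g n = n² + Vₙ`. -/
noncomputable def signedSum (ε g : ℤ → ℝ) (S : Multiset ℤ) : ℝ :=
  (S.map fun n => ε n * g n).sum

variable {F G : ℝ → ℝ} {ε g : ℤ → ℝ} {S T : Multiset ℤ}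

@[simp]
theorem absSum_zero (F : ℝ → ℝ) : absSum F 0 = 0 := by
  simp only [absSum, Multiset.map_zero, Multiset.sum_zero]

@[simp]
theorem absSum_cons (F : ℝ → ℝ) (n : ℤ) (S : Multiset ℤ) :
    absSum F (n ::ₘ S) = F |(n : ℝ)| + absSum F S := by
  simp only [absSum, Multiset.map_cons, Multiset.sum_cons]

@[simp]
theorem signedSum_cons (ε g : ℤ → ℝ) (n : ℤ) (S : Multiset ℤ) :
    signedSum ε g (n ::ₘ S) = ε n * g n + signedSum ε g S := by
  simp only [signedSum, Multiset.map_cons, Multiset.sum_cons]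

theorem absSum_nonneg (hF : ∀ t, 0 ≤ t → 0 ≤ F t) (S : Multiset ℤ) : 0 ≤ absSum F S := by
  refine Multiset.sum_nonneg fun y hy => ?_
  obtain ⟨n, -, rfl⟩ := Multiset.mem_map.1 hy
  exact hF _ (abs_nonneg _)

theorem absSum_le_absSum_of_le (hF : ∀ t, 0 ≤ t → 0 ≤ F t) (hST : S ≤ T) :
    absSum F S ≤ absSum F T := by
  obtain ⟨U, rfl⟩ := Multiset.le_iff_exists_add.1 hST
  rw [absSum, absSum, Multiset.map_add, Multiset.sum_add]
  exact le_add_of_nonneg_right (absSum_nonneg hF U)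

theorem apply_abs_le_absSum (hF : ∀ t, 0 ≤ t → 0 ≤ F t) {n : ℤ} (hn : n ∈ S) :
    F |(n : ℝ)| ≤ absSum F S := by
  rw [← Multiset.cons_erase hn, absSum_cons]
  exact le_add_of_nonneg_right (absSum_nonneg hF _)

theorem absSum_le_absSum (h : ∀ t, 0 ≤ t → F t ≤ G t) (S : Multiset ℤ) :
    absSum F S ≤ absSum G S :=
  Multiset.sum_map_le_sum_map _ _ fun _ _ => h _ (abs_nonneg _)

theorem absSum_add (F G : ℝ → ℝ) (S : Multiset ℤ) :
    absSum (fun t => F t + G t) S = absSum F S + absSum G S :=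
  Multiset.sum_map_add

theorem absSum_const_mul (r : ℝ) (F : ℝ → ℝ) (S : Multiset ℤ) :
    absSum (fun t => r * F t) S = r * absSum F S :=
  Multiset.sum_map_mul_left

theorem abs_signedSum_le (hε : ∀ n, |ε n| = 1) (hg : ∀ n : ℤ, |g n| ≤ F |(n : ℝ)|)
    (S : Multiset ℤ) : |signedSum ε g S| ≤ absSum F S := by
  refine Multiset.abs_sum_le_sum_abs.trans ?_
  rw [Multiset.map_map]
  refine Multiset.sum_map_le_sum_map _ _ fun n _ => ?_
  rw [Function.comp_apply, abs_mul, hε, one_mul]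
  exact hg n

namespace IsHalfSubadditive

theorem apply_add_absSum_le (hF : IsHalfSubadditive F) (G : ℝ → ℝ) (t : ℝ) (S : Multiset ℤ) :
    F (t + absSum G S) ≤ F t + absSum (fun s => F (G s)) S := by
  have h := Multiset.le_sum_nonempty_of_subadditive F hF.add_le
    (t ::ₘ S.map fun n : ℤ => G |(n : ℝ)|) Multiset.cons_ne_zero
  simp only [Multiset.sum_cons, Multiset.map_cons, Multiset.map_map] at h
  exact h

theorem apply_add_absSum_le_half (hF : IsHalfSubadditive F) {x : ℝ} (S : Multiset ℤ)
    (hS : ∀ n ∈ S, |(n : ℝ)| ≤ x) :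
    F (x + absSum id S) ≤ F x + 1 / 2 * absSum F S := by
  induction S using Multiset.induction_on with
  | empty => simp
  | cons n S ih =>
    have hS' := ih fun i hi => hS i (Multiset.mem_cons_of_mem hi)
    have hn : |(n : ℝ)| ≤ x + absSum id S :=
      (hS n (Multiset.mem_cons_self n S)).trans
        (le_add_of_nonneg_right (absSum_nonneg (fun _ ht => ht) S))
    rw [absSum_cons, absSum_cons, id_eq, add_comm |(n : ℝ)|, ← add_assoc]
    linarith [hF.add_le_of_le hn]

theorem exists_apply_add_absSum_le (hF : IsHalfSubadditive F) (t : ℝ) (S : Multiset ℤ) :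
    ∃ z, F (t + absSum id S) + 1 / 2 * absSum F (S.erase z) ≤ F t + absSum F S := by
  rcases eq_or_ne S 0 with rfl | hS
  · exact ⟨0, by simp⟩
  · obtain ⟨z, hz, hz_max⟩ := Multiset.exists_max_image (fun n : ℤ => |(n : ℝ)|) hS
    have hhalf := hF.apply_add_absSum_le_half (S.erase z)
      fun n hn => hz_max n (Multiset.mem_of_mem_erase hn)
    have hadd := hF.add_le t (|(z : ℝ)| + absSum id (S.erase z))
    refine ⟨z, ?_⟩
    rw [← Multiset.cons_erase hz, absSum_cons, absSum_cons, Multiset.erase_cons_head, id_eq]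
    linarith

end IsHalfSubadditive

end MultisetSums

section Resonance

theorem two_mul_abs_le_of_same_sign (u v : ℤ) : 2 * |u| ≤ |u + v| + |u ^ 2 + v ^ 2| := by
  have hu : |u| ≤ u ^ 2 := sq_abs u ▸ Int.le_self_sq |u|
  have hv : |v| ≤ v ^ 2 := sq_abs v ▸ Int.le_self_sq |v|
  have hsub : |u| ≤ |u + v| + |v| := by simpa using abs_sub (u + v) v
  rw [abs_of_nonneg (add_nonneg (sq_nonneg u) (sq_nonneg v))]
  linarith

theorem two_mul_abs_le_of_opposite_sign {u v : ℤ} (huv : u ≠ v) :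
    2 * |u| ≤ |u - v| + |u ^ 2 - v ^ 2| := by
  calc 2 * |u| = |(u - v) + (u + v)| := by
        rw [sub_add_add_cancel, ← two_mul, abs_mul, abs_two]
    _ ≤ |u - v| + 1 * |u + v| := by rw [one_mul]; exact abs_add_le _ _
    _ ≤ |u - v| + |u - v| * |u + v| := by
        gcongr
        exact Int.one_le_abs (sub_ne_zero.2 huv)
    _ = |u - v| + |u ^ 2 - v ^ 2| := by rw [← abs_mul, mul_comm, ← sq_sub_sq]

theorem two_mul_abs_le_of_signs {ε : ℤ → ℝ} (hε : ∀ n, |ε n| = 1) (u v : ℤ) :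
    2 * |(u : ℝ)| ≤ |ε u * u + ε v * v| + |ε u * (u : ℝ) ^ 2 + ε v * (v : ℝ) ^ 2| := by
  rcases abs_eq_abs.1 ((hε v).trans (hε u).symm) with h | h
  · rw [h, ← mul_add, ← mul_add, abs_mul, abs_mul, hε, one_mul, one_mul]
    exact_mod_cast two_mul_abs_le_of_same_sign u v
  · have huv : u ≠ v := by
      rintro rfl
      have hu := hε u
      rw [self_eq_neg.1 h, abs_zero] at hu
      exact zero_ne_one hu
    rw [h, neg_mul, neg_mul, ← sub_eq_add_neg, ← sub_eq_add_neg, ← mul_sub, ← mul_sub, abs_mul,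
      abs_mul, hε, one_mul, one_mul]
    exact_mod_cast two_mul_abs_le_of_opposite_sign huv

variable {F : ℝ → ℝ} {ε V : ℤ → ℝ}

theorem abs_le_abs_momentum_add_absSum_erase (hε : ∀ n, |ε n| = 1) {B : Multiset ℤ} {x : ℤ}
    (hx : x ∈ B) : |(x : ℝ)| ≤ |signedSum ε (↑) B| + absSum id (B.erase x) := by
  have hrest : |signedSum ε (↑) (B.erase x)| ≤ absSum id (B.erase x) :=
    abs_signedSum_le hε (F := id) (fun _ => le_rfl) _
  have hsplit : ε x * x = signedSum ε (↑) B - signedSum ε (↑) (B.erase x) := by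
    rw [eq_sub_iff_add_eq, ← signedSum_cons, Multiset.cons_erase hx]
  calc |(x : ℝ)| = |ε x * x| := by rw [abs_mul, hε, one_mul]
    _ ≤ |signedSum ε (↑) B| + |signedSum ε (↑) (B.erase x)| := hsplit ▸ abs_sub _ _
    _ ≤ |signedSum ε (↑) B| + absSum id (B.erase x) := by gcongr

theorem two_mul_abs_le_momentum_add_energy (hε : ∀ n, |ε n| = 1) {β : ℝ} (hV : ∀ n, |V n| ≤ β)
    (u v : ℤ) (C : Multiset ℤ) :
    2 * |(u : ℝ)| ≤ (|signedSum ε (↑) (u ::ₘ v ::ₘ C)| + absSum id C) +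
      (|signedSum ε (fun n => (n : ℝ) ^ 2 + V n) (u ::ₘ v ::ₘ C)| + 2 * β +
        absSum (fun t => t ^ 2 + β) C) := by
  set P := signedSum ε (↑) (u ::ₘ v ::ₘ C) with hP
  set E := signedSum ε (fun n => (n : ℝ) ^ 2 + V n) (u ::ₘ v ::ₘ C) with hE
  have hP_rest : |signedSum ε (↑) C| ≤ absSum id C :=
    abs_signedSum_le hε (F := id) (fun _ => le_rfl) C
  have hE_rest : |signedSum ε (fun n => (n : ℝ) ^ 2 + V n) C| ≤ absSum (fun t => t ^ 2 + β) C :=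
    abs_signedSum_le hε (fun n => (abs_add_le _ _).trans (by
      rw [abs_sq, sq_abs]; gcongr; exact hV n)) C
  have hεV (n : ℤ) : |ε n * V n| ≤ β := by rw [abs_mul, hε, one_mul]; exact hV n
  rw [signedSum_cons, signedSum_cons] at hP hE
  have hmomentum : |ε u * u + ε v * v| ≤ |P| + absSum id C := by
    rw [show ε u * u + ε v * v = P - signedSum ε (↑) C by rw [hP]; ring]
    linarith [abs_sub P (signedSum ε (↑) C)]
  have henergy : |ε u * (u : ℝ) ^ 2 + ε v * (v : ℝ) ^ 2| ≤
      |E| + 2 * β + absSum (fun t => t ^ 2 + β) C := by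
    rw [abs_le] at hE_rest ⊢
    have hu := abs_le.1 (hεV u)
    have hv := abs_le.1 (hεV v)
    constructor <;> linarith [neg_abs_le E, le_abs_self E]
  linarith [two_mul_abs_le_of_signs hε u v]

theorem abs_le_sq_momentum_add_absSum_sq (hε : ∀ n, |ε n| = 1) (hV : ∀ n, |V n| ≤ 2)
    (u v : ℤ) (C : Multiset ℤ)
    (hE : |signedSum ε (fun n => (n : ℝ) ^ 2 + V n) (u ::ₘ v ::ₘ C)| ≤ 1) :
    |(u : ℝ)| ≤ max 2 |signedSum ε (↑) (u ::ₘ v ::ₘ C)| ^ 2 +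
      absSum (fun t => max 2 t ^ 2) C := by
  have hlinear (t : ℝ) : t + 5 ≤ 2 * max 2 t ^ 2 := by
    nlinarith [le_max_left 2 t, le_max_right 2 t]
  have hquadratic (t : ℝ) (ht : 0 ≤ t) : id t + (t ^ 2 + 2) ≤ 2 * max 2 t ^ 2 := by
    rw [id_eq]
    nlinarith [le_max_left 2 t, le_max_right 2 t]
  have hsum := absSum_le_absSum hquadratic C
  rw [absSum_add, absSum_const_mul] at hsum
  linarith [two_mul_abs_le_momentum_add_energy hε hV u v C,
    hlinear |signedSum ε (↑) (u ::ₘ v ::ₘ C)|]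

variable {K : ℝ}

theorem apply_abs_le_momentum_add_absSum (hF : IsHalfSubadditive F)
    (hF_sq : ∀ t, F (max 2 t ^ 2) ≤ K * F t) (hε : ∀ n, |ε n| = 1) (hV : ∀ n, |V n| ≤ 2)
    (u v : ℤ) (C : Multiset ℤ)
    (hE : |signedSum ε (fun n => (n : ℝ) ^ 2 + V n) (u ::ₘ v ::ₘ C)| ≤ 1) :
    F |(u : ℝ)| ≤ K * (F |signedSum ε (↑) (u ::ₘ v ::ₘ C)| + absSum F C) := by
  set P := signedSum ε (↑) (u ::ₘ v ::ₘ C)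
  calc F |(u : ℝ)| ≤ F (max 2 |P| ^ 2 + absSum (fun t => max 2 t ^ 2) C) :=
        hF.mono (abs_le_sq_momentum_add_absSum_sq hε hV u v C hE)
    _ ≤ F (max 2 |P| ^ 2) + absSum (fun t => F (max 2 t ^ 2)) C := hF.apply_add_absSum_le _ _ _
    _ ≤ K * F |P| + absSum (fun t => K * F t) C :=
        add_le_add (hF_sq _) (absSum_le_absSum (fun t _ => hF_sq t) C)
    _ = K * (F |P| + absSum F C) := by rw [absSum_const_mul, mul_add]

theorem absSum_le_momentum_add_absSum_erase (hF : IsHalfSubadditive F) (hε : ∀ n, |ε n| = 1)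
    {B : Multiset ℤ} {x : ℤ} (hx : x ∈ B) :
    absSum F B ≤ F |signedSum ε (↑) B| + 2 * absSum F (B.erase x) := by
  have hFx : F |(x : ℝ)| ≤ F |signedSum ε (↑) B| + absSum F (B.erase x) :=
    (hF.mono (abs_le_abs_momentum_add_absSum_erase hε hx)).trans (hF.apply_add_absSum_le id _ _)
  rw [← Multiset.cons_erase hx, absSum_cons, Multiset.cons_erase hx]
  linarith

theorem absSum_le_momentum_add_absSum_erase_erase (hF : IsHalfSubadditive F) (hK : 1 ≤ K)
    (hF_sq : ∀ t, F (max 2 t ^ 2) ≤ K * F t) (hε : ∀ n, |ε n| = 1) (hV : ∀ n, |V n| ≤ 2)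
    {B : Multiset ℤ} (hE : |signedSum ε (fun n => (n : ℝ) ^ 2 + V n) B| ≤ 1) (x z : ℤ) :
    absSum F B ≤ (2 * K + 1) * (F |signedSum ε (↑) B| + absSum F ((B.erase x).erase z)) := by
  have hP := hF.nonneg |signedSum ε (↑) B|
  have hD := absSum_nonneg (fun t _ => hF.nonneg t) ((B.erase x).erase z)
  have hsingle : F |signedSum ε (↑) B| + 2 * absSum F ((B.erase x).erase z) ≤
      (2 * K + 1) * (F |signedSum ε (↑) B| + absSum F ((B.erase x).erase z)) := by
    nlinarith
  by_cases hx : x ∈ B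
  · by_cases hz : z ∈ B.erase x
    · obtain ⟨B', rfl⟩ := Multiset.exists_cons_of_mem hx
      rw [Multiset.erase_cons_head] at hz hD ⊢
      obtain ⟨C, rfl⟩ := Multiset.exists_cons_of_mem hz
      have hFx := apply_abs_le_momentum_add_absSum hF hF_sq hε hV x z C hE
      rw [Multiset.cons_swap] at hE
      have hFz := apply_abs_le_momentum_add_absSum hF hF_sq hε hV z x C hE
      rw [Multiset.cons_swap] at hFz
      rw [Multiset.erase_cons_head] at hD ⊢
      rw [absSum_cons, absSum_cons]
      linarith
    · rw [Multiset.erase_of_notMem hz] at hsingle ⊢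
      exact (absSum_le_momentum_add_absSum_erase hF hε hx).trans hsingle
  · rw [Multiset.erase_of_notMem hx] at hD hsingle ⊢
    by_cases hz : z ∈ B
    · exact (absSum_le_momentum_add_absSum_erase hF hε hz).trans hsingle
    · rw [Multiset.erase_of_notMem hz] at hD hsingle ⊢
      linarith

theorem absSum_le_of_near_resonance (hF : IsHalfSubadditive F) (hK : 1 ≤ K)
    (hF_sq : ∀ t, F (max 2 t ^ 2) ≤ K * F t) (hε : ∀ n, |ε n| = 1) (hV : ∀ n, |V n| ≤ 2)
    {B W : Multiset ℤ} (hBW : B ≤ W) (hE : |signedSum ε (fun n => (n : ℝ) ^ 2 + V n) B| ≤ 1)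
    {x : ℤ} (hxW : x ∈ W) (hx : x ∈ B ∨ x ∈ W.erase x) :
    absSum F B ≤
      6 * K * (absSum F W - 2 * F |(x : ℝ)| + 2 * F |signedSum ε (↑) B|) := by
  set P := signedSum ε (↑) B
  have hid (t : ℝ) (ht : 0 ≤ t) : 0 ≤ id t := ht
  have hBx : B.erase x ≤ W.erase x := Multiset.erase_le_erase x hBW
  have hx_le : |(x : ℝ)| ≤ |P| + absSum id (W.erase x) := by
    rcases hx with hx | hx
    · exact (abs_le_abs_momentum_add_absSum_erase hε hx).trans
        (add_le_add_right (absSum_le_absSum_of_le hid hBx) _)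
    · exact (apply_abs_le_absSum hid hx).trans (le_add_of_nonneg_left (abs_nonneg P))
  obtain ⟨z, hz⟩ := hF.exists_apply_add_absSum_le |P| (W.erase x)
  have hrest : absSum F ((B.erase x).erase z) ≤ absSum F ((W.erase x).erase z) :=
    absSum_le_absSum_of_le (fun t _ => hF.nonneg t) (Multiset.erase_le_erase z hBx)
  have hlower : F |P| + 1 / 2 * absSum F ((W.erase x).erase z) ≤
      absSum F W - 2 * F |(x : ℝ)| + 2 * F |P| := by
    have hW : absSum F W = F |(x : ℝ)| + absSum F (W.erase x) := by
      rw [← absSum_cons, Multiset.cons_erase hxW]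
    linarith [hF.mono hx_le]
  have hP := hF.nonneg |P|
  calc absSum F B
      ≤ (2 * K + 1) * (F |P| + absSum F ((B.erase x).erase z)) :=
        absSum_le_momentum_add_absSum_erase_erase hF hK hF_sq hε hV hE x z
    _ ≤ 3 * K * (2 * (F |P| + 1 / 2 * absSum F ((W.erase x).erase z))) := by
        refine mul_le_mul (by linarith) (by linarith) (add_nonneg hP ?_) (by linarith)
        exact absSum_nonneg (fun t _ => hF.nonneg t) _
    _ ≤ 3 * K * (2 * (absSum F W - 2 * F |(x : ℝ)| + 2 * F |P|)) := by gcongr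
    _ = 6 * K * (absSum F W - 2 * F |(x : ℝ)| + 2 * F |P|) := by ring

end Resonance

section Occupation

/-- The occupation numbers `2aₙ + kₙ + k'ₙ`. -/
noncomputable def totalOccupation (a k k' : ℤ →₀ ℕ) : ℤ →₀ ℕ := 2 • a + k + k'

/-- The distances `|kₙ - k'ₙ|`, as natural numbers: one of the two truncated differences
vanishes. -/
noncomputable def absDiff (k k' : ℤ →₀ ℕ) : ℤ →₀ ℕ := (k - k') + (k' - k)

/-- The sign of `kₙ - k'ₙ`, with the value `1` where this difference vanishes. -/
noncomputable def diffSign (k k' : ℤ →₀ ℕ) (n : ℤ) : ℝ := if k' n ≤ k n then 1 else -1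

variable (a k k' : ℤ →₀ ℕ)

theorem totalOccupation_apply (n : ℤ) : totalOccupation a k k' n = 2 * a n + k n + k' n := rfl

theorem absDiff_apply (n : ℤ) : absDiff k k' n = (k n - k' n) + (k' n - k n) := rfl

theorem abs_diffSign (n : ℤ) : |diffSign k k' n| = 1 := by
  unfold diffSign
  split_ifs <;> simp

theorem absDiff_mul_diffSign (n : ℤ) :
    (absDiff k k' n : ℝ) * diffSign k k' n = (k n : ℝ) - k' n := by
  rw [absDiff_apply, diffSign]
  split_ifs with h
  · rw [Nat.sub_eq_zero_of_le h, add_zero, Nat.cast_sub h, mul_one]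
  · have h' : k n ≤ k' n := (not_le.1 h).le
    rw [Nat.sub_eq_zero_of_le h', zero_add, Nat.cast_sub h', mul_neg_one, neg_sub]

theorem cast_absDiff (n : ℤ) : (absDiff k k' n : ℝ) = |(k n : ℝ) - k' n| := by
  rw [← absDiff_mul_diffSign, abs_mul, abs_diffSign, mul_one, Nat.abs_cast]

theorem toMultiset_absDiff_le_toMultiset_totalOccupation :
    Finsupp.toMultiset (absDiff k k') ≤ Finsupp.toMultiset (totalOccupation a k k') := by
  rw [Multiset.le_iff_count]
  intro n
  rw [Finsupp.count_toMultiset, Finsupp.count_toMultiset, absDiff_apply, totalOccupation_apply]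
  omega

variable {a k k'} in
-- The multiplicities of the two multisets have the same parity.
theorem mem_absDiff_or_mem_erase_totalOccupation {n : ℤ}
    (hn : n ∈ Finsupp.toMultiset (totalOccupation a k k')) :
    n ∈ Finsupp.toMultiset (absDiff k k') ∨
      n ∈ (Finsupp.toMultiset (totalOccupation a k k')).erase n := by
  rw [Finsupp.mem_toMultiset, Finsupp.mem_support_iff, totalOccupation_apply] at hn
  rw [← Multiset.one_le_count_iff_mem (s := Multiset.erase _ _), Multiset.count_erase_self,
    Finsupp.count_toMultiset, Finsupp.mem_toMultiset, Finsupp.mem_support_iff, absDiff_apply,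
    totalOccupation_apply]
  omega

theorem sum_map_toMultiset {α R : Type*} [NonAssocSemiring R] (w : α →₀ ℕ) {s : Finset α}
    (hs : w.support ⊆ s) (f : α → R) :
    ((Finsupp.toMultiset w).map f).sum = ∑ n ∈ s, (w n : R) * f n := by
  classical
  rw [Finset.sum_multiset_map_count, Finsupp.toFinset_toMultiset]
  simp only [Finsupp.count_toMultiset, nsmul_eq_mul]
  refine Finset.sum_subset hs fun n _ hn => ?_
  rw [Finsupp.notMem_support_iff.1 hn, Nat.cast_zero, zero_mul]

theorem support_absDiff_subset : (absDiff k k').support ⊆ k.support ∪ k'.support := fun n hn => by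
  simp only [Finset.mem_union, Finsupp.mem_support_iff, absDiff_apply] at hn ⊢
  omega

theorem support_totalOccupation_subset :
    (totalOccupation a k k').support ⊆ a.support ∪ k.support ∪ k'.support := fun n hn => by
  simp only [Finset.mem_union, Finsupp.mem_support_iff, totalOccupation_apply] at hn ⊢
  omega

theorem absSum_toMultiset_absDiff (F : ℝ → ℝ) :
    absSum F (Finsupp.toMultiset (absDiff k k')) =
      ∑ n ∈ k.support ∪ k'.support, |(k n : ℝ) - k' n| * F |(n : ℝ)| := by
  rw [absSum, sum_map_toMultiset _ (support_absDiff_subset k k')]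
  simp only [cast_absDiff]

theorem absSum_toMultiset_totalOccupation (F : ℝ → ℝ) :
    absSum F (Finsupp.toMultiset (totalOccupation a k k')) =
      ∑ n ∈ a.support ∪ k.support ∪ k'.support,
        ((2 * a n + k n + k' n : ℕ) : ℝ) * F |(n : ℝ)| :=
  sum_map_toMultiset _ (support_totalOccupation_subset a k k') _

theorem signedSum_toMultiset_absDiff (g : ℤ → ℝ) :
    signedSum (diffSign k k') g (Finsupp.toMultiset (absDiff k k')) =
      ∑ n ∈ k.support ∪ k'.support, ((k n : ℝ) - k' n) * g n := by
  rw [signedSum, sum_map_toMultiset _ (support_absDiff_subset k k')]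
  simp only [← mul_assoc, absDiff_mul_diffSign]

theorem cast_momentum : (momentum k k' : ℝ) =
    signedSum (diffSign k k') (↑) (Finsupp.toMultiset (absDiff k k')) := by
  rw [signedSum_toMultiset_absDiff, momentum]
  push_cast
  rfl

theorem descList_headI_mem {M : Multiset ℕ} (hM : M ≠ 0) : (descList M).headI ∈ M := by
  have hmem (y : ℕ) : y ∈ descList M ↔ y ∈ M := by simp [descList]
  obtain ⟨y, hy⟩ := Multiset.exists_mem_of_ne_zero hM
  obtain ⟨h, t, hl⟩ := List.exists_cons_of_ne_nil (List.ne_nil_of_mem ((hmem y).2 hy))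
  rw [← hmem, hl]
  exact List.mem_cons_self

theorem reps_eq_map_natAbs :
    reps a k k' = (Finsupp.toMultiset (totalOccupation a k k')).map Int.natAbs := by
  rw [Finsupp.toMultiset_apply, Finsupp.sum_of_support_subset _
    (support_totalOccupation_subset a k k') (fun n m => m • ({n} : Multiset ℤ))
      (fun _ _ => zero_nsmul _),
    ← Multiset.coe_mapAddMonoidHom, map_sum]
  simp [reps, Multiset.bind, Multiset.join, Finset.sum, Multiset.nsmul_singleton,
    totalOccupation_apply]

variable {a k k'} in
theorem exists_natAbs_eq_headI_descList_reps (hne : ¬(a = 0 ∧ k = 0 ∧ k' = 0)) :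
    ∃ x ∈ Finsupp.toMultiset (totalOccupation a k k'),
      x.natAbs = (descList (reps a k k')).headI := by
  have hW : totalOccupation a k k' ≠ 0 := fun h => hne (by
    simpa [totalOccupation, and_assoc] using h)
  have hreps : reps a k k' ≠ 0 := by
    rwa [reps_eq_map_natAbs, Ne, Multiset.map_eq_zero, Finsupp.toMultiset_eq_iff,
      Multiset.toFinsupp_zero]
  have hhead := descList_headI_mem hreps
  exact Multiset.mem_map.1 (reps_eq_map_natAbs a k k' ▸ hhead)

end Occupation

theorem le_mul_of_le_mul_of_le {L C D R : ℝ} (hL : 0 ≤ L) (hC : 0 < C) (hCD : C ≤ D)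
    (h : L ≤ C * R) : L ≤ D * R :=
  h.trans (mul_le_mul_of_nonneg_right hCD ((mul_nonneg_iff_of_pos_left hC).1 (hL.trans h)))

theorem full_dim_KAM_stmt4_general (σ : ℝ) (hσ : 0 ≤ σ) (c : ℝ) (hc : 2 ≤ c)
    (hsub : ∀ x y : ℝ, c ≤ y → y ≤ x →
      Real.log (x + y) ^ σ ≤ Real.log x ^ σ + (1 / 2) * Real.log y ^ σ)
    (a k k' : ℤ →₀ ℕ) (hne : ¬(a = 0 ∧ k = 0 ∧ k' = 0))
    (V : ℤ → ℝ) (hV : ∀ n, |V n| ≤ 2)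
    (hsmall : |∑ n ∈ k.support ∪ k'.support,
        ((k n : ℝ) - (k' n : ℝ)) * ((n : ℝ) ^ 2 + V n)| ≤ 1) :
    ∑ n ∈ k.support ∪ k'.support, |(k n : ℝ) - (k' n : ℝ)| * lnZ c σ n
      ≤ 6 * (2 : ℝ) ^ σ *
        ((∑ n ∈ a.support ∪ k.support ∪ k'.support,
            ((2 * a n + k n + k' n : ℕ) : ℝ) * lnZ c σ n)
          - 2 * lnN c σ (descList (reps a k k')).headI
          + 2 * lnN c σ (momentum k k').natAbs) := by
  have hF := isHalfSubadditive_logWeight hσ (one_le_two.trans hc) hsub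
  have hK : (1 : ℝ) ≤ 2 ^ σ := Real.one_le_rpow one_le_two hσ
  obtain ⟨x, hxW, hx_head⟩ := exists_natAbs_eq_headI_descList_reps hne
  rw [← signedSum_toMultiset_absDiff k k' fun n => (n : ℝ) ^ 2 + V n] at hsmall
  rw [← hx_head, lnN_natAbs_eq_logWeight, lnN_natAbs_eq_logWeight, cast_momentum]
  simp only [lnZ_eq_logWeight]
  rw [← absSum_toMultiset_absDiff, ← absSum_toMultiset_totalOccupation]
  exact absSum_le_of_near_resonance hF hK (logWeight_max_two_sq_le hσ hc) (abs_diffSign k k') hV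
    (toMultiset_absDiff_le_toMultiset_totalOccupation a k k') hsmall hxW
    (mem_absDiff_or_mem_erase_totalOccupation hxW)

/-- inequality (62) of the paper. If `|Ṽₙ| ≤ 2` for all `n` and
`|∑ₙ (kₙ - k'ₙ)(n² + Ṽₙ)| ≤ 1`, then
`∑ₙ |kₙ - k'ₙ|·ln^σ⌊n⌋ ≤ 6·4^σ·( ∑ₙ (2aₙ + kₙ + k'ₙ)·ln^σ⌊n⌋ − 2·ln^σ⌊n₁*⌋ + 2·ln^σ⌊m*(k,k')⌋ )`,
where `n₁*` is the largest entry of the multiset with each `|n|` repeated `2aₙ+kₙ+k'ₙ` times. -/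
theorem full_dim_KAM_stmt4 (σ : ℝ) (hσ : 2 < σ) (c : ℝ) (hc : Real.exp 1 ≤ c)
    (hsub : ∀ x y : ℝ, c ≤ y → y ≤ x →
      Real.log (x + y) ^ σ ≤ Real.log x ^ σ + (1 / 2) * Real.log y ^ σ)
    (a k k' : ℤ →₀ ℕ) (hne : ¬(a = 0 ∧ k = 0 ∧ k' = 0))
    (V : ℤ → ℝ) (hV : ∀ n, |V n| ≤ 2)
    (hsmall : |∑ n ∈ k.support ∪ k'.support,
        ((k n : ℝ) - (k' n : ℝ)) * ((n : ℝ) ^ 2 + V n)| ≤ 1) :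
    ∑ n ∈ k.support ∪ k'.support, |(k n : ℝ) - (k' n : ℝ)| * lnZ c σ n
      ≤ 6 * (4 : ℝ) ^ σ *
        ((∑ n ∈ a.support ∪ k.support ∪ k'.support,
            ((2 * a n + k n + k' n : ℕ) : ℝ) * lnZ c σ n)
          - 2 * lnN c σ (descList (reps a k k')).headI
          + 2 * lnN c σ (momentum k k').natAbs) :=
  le_mul_of_le_mul_of_le
    (Finset.sum_nonneg fun n _ => mul_nonneg (abs_nonneg _)
      (logWeight_nonneg (Real.one_le_exp zero_le_one |>.trans hc) σ |(n : ℝ)|))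
    (by positivity) (by gcongr; norm_num)
    (full_dim_KAM_stmt4_general σ (by linarith) c (by linarith [Real.exp_one_gt_d9]) hsub
      a k k' hne V hV hsmall)
end

section
/- For every real σ > 2 and every δ ∈ (0,1), the series Σ_{j≥1} exp(−δ·(ln j)^σ) converges and Σ_{j≥1} exp(−δ·(ln j)^σ) ≤ (6/δ)·exp( (1/δ)^{1/(σ−1)} ). -/
/-!
Put `T = (1 / δ) ^ (1 / (σ - 1))`, so that `δ * T ^ σ = T`. The tangent line to the convex function
`y ↦ δ * y ^ σ` at `T` has slope `σ`, and at `y = log x` this gives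
`exp (-δ * log x ^ σ) ≤ exp T ^ (σ - 1) * x ^ (-σ)`. The integral test compares the series with
`1 + ∫ x in Ioi 1, exp (-δ * log x ^ σ)`. The integrand is at most `1`, which contributes at most
`exp T - 1` up to `x = exp T`; beyond `exp T` the power bound contributes at most `1 / (σ - 1)`.
The sum is therefore at most `exp T + 1 / (σ - 1)`.
-/

open MeasureTheory Set

section IntegralTest

variable {f : ℝ → ℝ}

theorem summable_pnat_of_antitoneOn_of_integrableOn (hf : AntitoneOn f (Ici 1))
    (hint : IntegrableOn f (Ioi 1)) (hnonneg : ∀ x ∈ Ioi 1, 0 ≤ f x) :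
    Summable fun j : ℕ+ => f j :=
  summable_pnat_iff_summable_nat.mpr <|
    AntitoneOn.summable_of_integrableOn_Ioi (N := 1) (mod_cast hf) (mod_cast hint)
      (mod_cast hnonneg)

theorem tsum_pnat_le_add_integral_of_antitoneOn (hf : AntitoneOn f (Ici 1))
    (hint : IntegrableOn f (Ioi 1)) (hnonneg : ∀ x ∈ Ioi 1, 0 ≤ f x) :
    ∑' j : ℕ+, f j ≤ f 1 + ∫ x in Ioi 1, f x := by
  have hsum : Summable fun n : ℕ => f (n + 1 : ℕ) :=
    (summable_pnat_iff_summable_succ (f := fun n : ℕ => f n)).mp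
      (summable_pnat_of_antitoneOn_of_integrableOn hf hint hnonneg)
  have htail : ∑' n : ℕ, f (n + 1 + 1 : ℕ) ≤ ∫ x in Ioi 1, f x :=
    mod_cast AntitoneOn.tsum_comp_add_le_integral 1 (mod_cast hf) (mod_cast hint)
      (mod_cast hnonneg)
  rw [tsum_pnat_eq_tsum_succ (f := fun n : ℕ => f n), hsum.tsum_eq_zero_add]
  simpa using htail

end IntegralTest

section PowerDecay

variable {f : ℝ → ℝ} {a C s : ℝ}

theorem integrableOn_Ioi_of_le_mul_rpow_neg (ha : 0 < a) (hs : 1 < s)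
    (hf : AEStronglyMeasurable f (volume.restrict (Ioi a))) (hnonneg : ∀ x ∈ Ioi a, 0 ≤ f x)
    (hle : ∀ x ∈ Ioi a, f x ≤ C * x ^ (-s)) : IntegrableOn f (Ioi a) := by
  have hmajorant : IntegrableOn (fun x => C * x ^ (-s)) (Ioi a) :=
    (integrableOn_Ioi_rpow_of_lt (by linarith) ha).const_mul C
  refine hmajorant.mono' hf ?_
  filter_upwards [ae_restrict_mem measurableSet_Ioi] with x hx
  rw [Real.norm_of_nonneg (hnonneg x hx)]
  exact hle x hx

theorem setIntegral_Ioi_le_of_le_mul_rpow_neg (ha : 0 < a) (hs : 1 < s)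
    (hint : IntegrableOn f (Ioi a)) (hle : ∀ x ∈ Ioi a, f x ≤ C * x ^ (-s)) :
    ∫ x in Ioi a, f x ≤ C * (a ^ (1 - s) / (s - 1)) := by
  have hs' : -s < -1 := by linarith
  calc ∫ x in Ioi a, f x
      ≤ ∫ x in Ioi a, C * x ^ (-s) :=
        setIntegral_mono_on hint ((integrableOn_Ioi_rpow_of_lt hs' ha).const_mul C)
          measurableSet_Ioi hle
    _ = C * (a ^ (1 - s) / (s - 1)) := by
        rw [integral_const_mul, integral_Ioi_rpow_of_lt hs' ha, neg_add_eq_sub, neg_div,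
          ← div_neg, neg_sub]

theorem setIntegral_Ioi_one_le_of_le_one_of_le_mul_rpow_neg {M : ℝ} (hM : 1 ≤ M) (hs : 1 < s)
    (hint : IntegrableOn f (Ioi 1)) (hle_one : ∀ x ∈ Ioi 1, f x ≤ 1)
    (hle : ∀ x ∈ Ioi M, f x ≤ M ^ (s - 1) * x ^ (-s)) :
    ∫ x in Ioi 1, f x ≤ M - 1 + 1 / (s - 1) := by
  have hM0 : 0 < M := by linarith
  have hint_head : IntegrableOn f (Ioc 1 M) := hint.mono_set Ioc_subset_Ioi_self
  have hint_tail : IntegrableOn f (Ioi M) := hint.mono_set (Ioi_subset_Ioi hM)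
  have hhead : ∫ x in Ioc 1 M, f x ≤ M - 1 :=
    calc ∫ x in Ioc 1 M, f x
        ≤ ∫ _ in Ioc 1 M, (1 : ℝ) :=
          setIntegral_mono_on hint_head (by simp) measurableSet_Ioc
            fun x hx => hle_one x hx.1
      _ = M - 1 := by simp [hM]
  have htail : ∫ x in Ioi M, f x ≤ 1 / (s - 1) :=
    calc ∫ x in Ioi M, f x
        ≤ M ^ (s - 1) * (M ^ (1 - s) / (s - 1)) :=
          setIntegral_Ioi_le_of_le_mul_rpow_neg hM0 hs hint_tail hle
      _ = 1 / (s - 1) := by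
          rw [← mul_div_assoc, ← Real.rpow_add hM0, sub_add_sub_cancel, sub_self, Real.rpow_zero]
  rw [← Ioc_union_Ioi_eq_Ioi hM,
    setIntegral_union (Ioc_disjoint_Ioi le_rfl) measurableSet_Ioi hint_head hint_tail]
  exact add_le_add hhead htail

end PowerDecay

section ExpLogRpow

variable {σ δ T x : ℝ}

theorem mul_one_div_rpow_one_div_rpow {s : ℝ} (hδ : 0 < δ) (hs : s ≠ 0) :
    δ * ((1 / δ) ^ (1 / s)) ^ s = 1 := by
  rw [← Real.rpow_mul (by positivity), one_div_mul_cancel hs, Real.rpow_one,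
    mul_one_div_cancel hδ.ne']

theorem add_mul_sub_le_mul_rpow (hσ : 1 ≤ σ) (hT : 0 < T) (hδT : δ * T ^ (σ - 1) = 1)
    (hx : 0 ≤ x) : T + σ * (x - T) ≤ δ * x ^ σ := by
  have hbernoulli : 1 + σ * (x / T - 1) ≤ (x / T) ^ σ := by
    have hxT : -1 ≤ x / T - 1 := by linarith [div_nonneg hx hT.le]
    simpa only [add_sub_cancel] using one_add_mul_self_le_rpow_one_add hxT hσ
  have hδTσ : δ * T ^ σ = T := by
    rw [← sub_add_cancel σ 1, Real.rpow_add_one hT.ne', ← mul_assoc, hδT, one_mul]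
  calc T + σ * (x - T)
      = T * (1 + σ * (x / T - 1)) := by field_simp
    _ ≤ T * (x / T) ^ σ := by gcongr
    _ = δ * T ^ σ * (x / T) ^ σ := by rw [hδTσ]
    _ = δ * x ^ σ := by
        rw [mul_assoc, ← Real.mul_rpow hT.le (div_nonneg hx hT.le), mul_div_cancel₀ x hT.ne']

theorem antitoneOn_exp_neg_mul_log_rpow (hσ : 0 ≤ σ) (hδ : 0 ≤ δ) :
    AntitoneOn (fun x => Real.exp (-δ * Real.log x ^ σ)) (Ici 1) := by
  intro x hx y _ hxy
  have hx0 : 0 < x := zero_lt_one.trans_le hx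
  have hlog : 0 ≤ Real.log x := Real.log_nonneg hx
  simp only [neg_mul]
  gcongr

theorem exp_neg_mul_log_rpow_le_one (hδ : 0 ≤ δ) (hx : 1 ≤ x) :
    Real.exp (-δ * Real.log x ^ σ) ≤ 1 := by
  rw [Real.exp_le_one_iff, neg_mul, neg_nonpos]
  exact mul_nonneg hδ (Real.rpow_nonneg (Real.log_nonneg hx) σ)

theorem exp_neg_mul_log_rpow_le_mul_rpow_neg (hσ : 1 ≤ σ) (hT : 0 < T)
    (hδT : δ * T ^ (σ - 1) = 1) (hx : 1 ≤ x) :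
    Real.exp (-δ * Real.log x ^ σ) ≤ Real.exp T ^ (σ - 1) * x ^ (-σ) := by
  have htangent := add_mul_sub_le_mul_rpow hσ hT hδT (Real.log_nonneg hx)
  rw [← Real.exp_mul, Real.rpow_def_of_pos (zero_lt_one.trans_le hx), ← Real.exp_add,
    Real.exp_le_exp]
  linarith

theorem integrableOn_exp_neg_mul_log_rpow (hσ : 1 < σ) (hδ : 0 < δ) :
    IntegrableOn (fun x => Real.exp (-δ * Real.log x ^ σ)) (Ioi 1) := by
  have hδT := mul_one_div_rpow_one_div_rpow hδ (sub_pos.mpr hσ).ne'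
  exact integrableOn_Ioi_of_le_mul_rpow_neg one_pos hσ
    (by fun_prop : Measurable _).aestronglyMeasurable (fun _ _ => (Real.exp_pos _).le)
    fun x hx => exp_neg_mul_log_rpow_le_mul_rpow_neg hσ.le (by positivity) hδT (le_of_lt hx)

theorem setIntegral_exp_neg_mul_log_rpow_le (hσ : 1 < σ) (hδ : 0 < δ) :
    ∫ x in Ioi 1, Real.exp (-δ * Real.log x ^ σ)
      ≤ Real.exp ((1 / δ) ^ (1 / (σ - 1))) - 1 + 1 / (σ - 1) := by
  have hT : 0 < (1 / δ) ^ (1 / (σ - 1)) := by positivity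
  have hM : 1 ≤ Real.exp ((1 / δ) ^ (1 / (σ - 1))) := Real.one_le_exp hT.le
  have hδT := mul_one_div_rpow_one_div_rpow hδ (sub_pos.mpr hσ).ne'
  exact setIntegral_Ioi_one_le_of_le_one_of_le_mul_rpow_neg hM hσ
    (integrableOn_exp_neg_mul_log_rpow hσ hδ)
    (fun x hx => exp_neg_mul_log_rpow_le_one hδ.le (le_of_lt hx))
    fun x hx => exp_neg_mul_log_rpow_le_mul_rpow_neg hσ.le hT hδT (hM.trans (le_of_lt hx))

theorem full_dim_KAM_stmt7_general (hσ : 1 < σ) (hδ : 0 < δ) :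
    Summable (fun j : ℕ+ => Real.exp (-δ * Real.log (j : ℝ) ^ σ)) ∧
    ∑' j : ℕ+, Real.exp (-δ * Real.log (j : ℝ) ^ σ)
      ≤ Real.exp ((1 / δ) ^ (1 / (σ - 1))) + 1 / (σ - 1) := by
  have hanti := antitoneOn_exp_neg_mul_log_rpow (zero_le_one.trans hσ.le) hδ.le
  have hint := integrableOn_exp_neg_mul_log_rpow hσ hδ
  have hnonneg : ∀ x ∈ Ioi (1 : ℝ), 0 ≤ Real.exp (-δ * Real.log x ^ σ) :=
    fun _ _ => (Real.exp_pos _).le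
  refine ⟨summable_pnat_of_antitoneOn_of_integrableOn hanti hint hnonneg, ?_⟩
  have htsum := tsum_pnat_le_add_integral_of_antitoneOn hanti hint hnonneg
  have hfirst := exp_neg_mul_log_rpow_le_one (σ := σ) hδ.le le_rfl
  have hintegral := setIntegral_exp_neg_mul_log_rpow_le hσ hδ
  linarith

theorem exp_add_one_div_sub_one_le (hσ : 2 ≤ σ) (hδ : 0 < δ) (hδ_le : δ ≤ 3) (hT : 0 ≤ T) :
    Real.exp T + 1 / (σ - 1) ≤ (6 / δ) * Real.exp T := by
  have hinv : 1 / (σ - 1) ≤ Real.exp T :=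
    calc 1 / (σ - 1) ≤ 1 := by rw [div_le_one (by linarith)]; linarith
      _ ≤ Real.exp T := Real.one_le_exp hT
  have htwo : 2 ≤ 6 / δ := by rw [le_div_iff₀ hδ]; linarith
  calc Real.exp T + 1 / (σ - 1) ≤ 2 * Real.exp T := by linarith
    _ ≤ (6 / δ) * Real.exp T := by gcongr

end ExpLogRpow

/-- Lemma 5.5 of the paper. For `σ > 2` and `δ ∈ (0,1)`, the series
`∑_{j≥1} exp(−δ·(ln j)^σ)` converges and is at most `(6/δ)·exp((1/δ)^{1/(σ−1)})`. -/
theorem full_dim_KAM_stmt7 (σ δ : ℝ) (hσ : 2 < σ) (hδ : δ ∈ Set.Ioo (0 : ℝ) 1) :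
    Summable (fun j : ℕ+ => Real.exp (-δ * Real.log (j : ℝ) ^ σ)) ∧
    ∑' j : ℕ+, Real.exp (-δ * Real.log (j : ℝ) ^ σ)
      ≤ (6 / δ) * Real.exp ((1 / δ) ^ (1 / (σ - 1))) := by
  obtain ⟨hδ0, hδ1⟩ := hδ
  exact (full_dim_KAM_stmt7_general (by linarith) hδ0).imp_right fun hle =>
    hle.trans (exp_add_one_div_sub_one_le hσ.le hδ0 (by linarith) (by positivity))
end

section
/- For every real σ > 2 and every δ ∈ (0,1), one has Π_{n∈ℤ} (1 − exp(−δ·ln^σ⌊n⌋))^{−1} ≤ exp( (18/δ)·exp( (4/δ)^{1/(σ−1)} ) ). -/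
/-! Each factor is `(1 - exp (-u))⁻¹ = 1 + (exp u - 1)⁻¹` with `u = δ * lnZ c σ n`, so the product
is at most the exponential of the sum of the terms `(exp u - 1)⁻¹`. Put
`N = exp ((4 / δ) ^ (1 / (σ - 1)))`. A term with `|n| ≤ N` is at most `1 / δ`, since `δ ≤ u`. If
`N < |n|`, then `4 / δ ≤ (log |n|) ^ (σ - 1)`, hence `4 * log |n| ≤ u`; half of the exponent already
gives `n ^ 2 ≤ exp (u / 2)`, and the other half gains a factor `u / 2 ≥ δ / 2`, so that the term is
at most `(2 / δ) / n ^ 2`. The two ranges contribute at most `(2 * N + 1) / δ` and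
`(2 / δ) * (π ^ 2 / 3)`. -/

theorem inv_one_sub_exp_neg {x : ℝ} (hx : x ≠ 0) :
    (1 - Real.exp (-x))⁻¹ = 1 + (Real.exp x - 1)⁻¹ := by
  have hexp_sub : Real.exp x - 1 ≠ 0 := sub_ne_zero.2 ((Real.exp_eq_one_iff x).not.2 hx)
  have hfactor : 1 - Real.exp (-x) = (Real.exp x - 1) / Real.exp x := by
    rw [sub_div, div_self (Real.exp_ne_zero x), Real.exp_neg, one_div]
  rw [hfactor, inv_div]
  field_simp
  ring

theorem mul_le_two_mul_exp_sub_one {a x : ℝ} (ha : 1 ≤ a) (hx : 0 ≤ x)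
    (hax : a ≤ Real.exp (x / 2)) : a * x ≤ 2 * (Real.exp x - 1) := by
  have hprod : a * (x / 2 + 1) ≤ Real.exp x :=
    calc a * (x / 2 + 1) ≤ Real.exp (x / 2) * Real.exp (x / 2) :=
          mul_le_mul hax (Real.add_one_le_exp _) (by positivity) (by positivity)
      _ = Real.exp x := by rw [← Real.exp_add, add_halves]
  linarith

theorem tprod_one_add_le_exp_tsum {ι : Type*} {f : ι → ℝ} (hf₀ : ∀ i, 0 ≤ f i)
    (hf : Summable f) : ∏' i, (1 + f i) ≤ Real.exp (∑' i, f i) :=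
  (Real.multipliable_one_add_of_summable hf).tprod_le_of_prod_le fun s =>
    (Real.prod_one_add_le_exp_sum s hf₀).trans
      (Real.exp_le_exp.2 (hf.sum_le_tsum s fun i _ => hf₀ i))

theorem hasSum_int_inv_sq : HasSum (fun n : ℤ => ((n : ℝ) ^ 2)⁻¹) (Real.pi ^ 2 / 3) := by
  have hnat : HasSum (fun n : ℕ => ((n : ℝ) ^ 2)⁻¹) (Real.pi ^ 2 / 6) := by
    simpa only [one_div] using hasSum_zeta_two
  have hvalue : Real.pi ^ 2 / 3 = Real.pi ^ 2 / 6 + Real.pi ^ 2 / 6 - (((0 : ℤ) : ℝ) ^ 2)⁻¹ := by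
    norm_num
    ring
  rw [hvalue]
  exact HasSum.of_nat_of_neg (by simpa using hnat) (by simpa using hnat)

theorem hasSum_ite_abs_intCast_le {x : ℝ} (hx : 0 ≤ x) :
    HasSum (fun n : ℤ => if |(n : ℝ)| ≤ x then (1 : ℝ) else 0) (2 * ⌊x⌋ + 1) := by
  have hfloor : 0 ≤ ⌊x⌋ := Int.floor_nonneg.2 hx
  have hmem (n : ℤ) : n ∈ Finset.Icc (-⌊x⌋) ⌊x⌋ ↔ |(n : ℝ)| ≤ x := by
    rw [Finset.mem_Icc, ← abs_le, Int.le_floor, Int.cast_abs]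
  have hcard : ((Finset.Icc (-⌊x⌋) ⌊x⌋).card : ℤ) = 2 * ⌊x⌋ + 1 := by
    rw [Int.card_Icc_of_le _ _ (by lia)]
    ring
  have hsum : ∑ n ∈ Finset.Icc (-⌊x⌋) ⌊x⌋, (if |(n : ℝ)| ≤ x then (1 : ℝ) else 0)
      = 2 * ⌊x⌋ + 1 := by
    rw [Finset.sum_congr rfl fun n hn => if_pos ((hmem n).1 hn), Finset.sum_const, nsmul_one]
    exact_mod_cast hcard
  exact hsum ▸ hasSum_sum_of_ne_finset_zero fun n hn => if_neg (mt (hmem n).2 hn)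

section Growth

variable {δ N : ℝ}

theorem inv_exp_sub_one_le_ite_add_inv_sq {u : ℝ} {n : ℤ} (hδ : 0 < δ) (hN : 1 ≤ N)
    (hu : δ ≤ u) (hgrowth : N < |(n : ℝ)| → 4 * Real.log |(n : ℝ)| ≤ u) :
    (Real.exp u - 1)⁻¹ ≤ δ⁻¹ * ((if |(n : ℝ)| ≤ N then 1 else 0) + 2 * ((n : ℝ) ^ 2)⁻¹) := by
  split_ifs with hn
  · calc (Real.exp u - 1)⁻¹ ≤ δ⁻¹ := inv_anti₀ hδ (by linarith [Real.add_one_le_exp u])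
      _ ≤ δ⁻¹ * (1 + 2 * ((n : ℝ) ^ 2)⁻¹) :=
        le_mul_of_one_le_right (by positivity) (le_add_of_nonneg_right (by positivity))
  · rw [not_le] at hn
    have habs : 1 ≤ |(n : ℝ)| := hN.trans hn.le
    have hsq : 1 ≤ (n : ℝ) ^ 2 := (one_le_sq_iff_one_le_abs _).2 habs
    have hsq_le : (n : ℝ) ^ 2 ≤ Real.exp (u / 2) := by
      rw [← Real.log_le_iff_le_exp (by positivity), Real.log_pow, ← Real.log_abs]
      push_cast
      linarith [hgrowth hn]
    have hden : δ * ((n : ℝ) ^ 2 / 2) ≤ Real.exp u - 1 := by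
      have := mul_le_two_mul_exp_sub_one hsq (hδ.le.trans hu) hsq_le
      nlinarith
    calc (Real.exp u - 1)⁻¹ ≤ (δ * ((n : ℝ) ^ 2 / 2))⁻¹ := inv_anti₀ (by positivity) hden
      _ = δ⁻¹ * (0 + 2 * ((n : ℝ) ^ 2)⁻¹) := by rw [mul_inv, inv_div, zero_add, div_eq_mul_inv]

variable {u : ℤ → ℝ}

theorem summable_inv_exp_sub_one_and_tsum_le (hδ : 0 < δ) (hN : 1 ≤ N) (hu : ∀ n, δ ≤ u n)
    (hgrowth : ∀ n : ℤ, N < |(n : ℝ)| → 4 * Real.log |(n : ℝ)| ≤ u n) :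
    Summable (fun n => (Real.exp (u n) - 1)⁻¹) ∧
      ∑' n, (Real.exp (u n) - 1)⁻¹ ≤ 10 / δ * N := by
  have hbound (n : ℤ) := inv_exp_sub_one_le_ite_add_inv_sq hδ hN (hu n) (hgrowth n)
  have hmajorant :=
    ((hasSum_ite_abs_intCast_le (zero_le_one.trans hN)).add
      (hasSum_int_inv_sq.mul_left 2)).mul_left δ⁻¹
  have hsummable : Summable fun n => (Real.exp (u n) - 1)⁻¹ :=
    hmajorant.summable.of_nonneg_of_le
      (fun n => inv_nonneg.2 (sub_nonneg.2 (Real.one_le_exp (hδ.le.trans (hu n))))) hbound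
  have hconst : 2 * ⌊N⌋ + 1 + 2 * (Real.pi ^ 2 / 3) ≤ 10 * N := by
    nlinarith [Int.floor_le N, Real.pi_lt_d2, Real.pi_pos]
  refine ⟨hsummable, (hasSum_le hbound hsummable.hasSum hmajorant).trans ?_⟩
  calc δ⁻¹ * (2 * ⌊N⌋ + 1 + 2 * (Real.pi ^ 2 / 3)) ≤ δ⁻¹ * (10 * N) := by gcongr
    _ = 10 / δ * N := by ring

theorem multipliable_inv_one_sub_exp_neg_and_tprod_le (hδ : 0 < δ) (hN : 1 ≤ N)
    (hu : ∀ n, δ ≤ u n)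
    (hgrowth : ∀ n : ℤ, N < |(n : ℝ)| → 4 * Real.log |(n : ℝ)| ≤ u n) :
    Multipliable (fun n => (1 - Real.exp (-u n))⁻¹) ∧
      ∏' n, (1 - Real.exp (-u n))⁻¹ ≤ Real.exp (10 / δ * N) := by
  have hpos (n : ℤ) : 0 < u n := hδ.trans_le (hu n)
  obtain ⟨hsummable, htsum⟩ := summable_inv_exp_sub_one_and_tsum_le hδ hN hu hgrowth
  simp only [fun n => inv_one_sub_exp_neg (hpos n).ne']
  exact ⟨Real.multipliable_one_add_of_summable hsummable,
    (tprod_one_add_le_exp_tsum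
      (fun n => inv_nonneg.2 (sub_nonneg.2 (Real.one_le_exp (hpos n).le))) hsummable).trans
      (Real.exp_le_exp.2 htsum)⟩

end Growth

theorem mul_le_mul_rpow_of_rpow_one_div_le {σ δ κ x : ℝ} (hσ : 1 < σ) (hδ : 0 < δ) (hκ : 0 < κ)
    (hx : (κ / δ) ^ (1 / (σ - 1)) ≤ x) : κ * x ≤ δ * x ^ σ := by
  have hx₀ : 0 < x := (by positivity : 0 < (κ / δ) ^ (1 / (σ - 1))).trans_le hx
  have hpow : κ / δ ≤ x ^ (σ - 1) := by
    rw [one_div] at hx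
    exact (Real.rpow_inv_le_iff_of_pos (by positivity) hx₀.le (sub_pos.2 hσ)).1 hx
  calc κ * x ≤ δ * x ^ (σ - 1) * x := by
        gcongr
        exact (div_le_iff₀' hδ).1 hpow
    _ = δ * x ^ σ := by rw [mul_assoc, ← Real.rpow_add_one hx₀.ne', sub_add_cancel]

theorem one_le_lnZ {c σ : ℝ} (hc : Real.exp 1 ≤ c) (hσ : 0 ≤ σ) (n : ℤ) : 1 ≤ lnZ c σ n := by
  have hexp : Real.exp 1 ≤ max c |(n : ℝ)| := hc.trans (le_max_left _ _)
  exact Real.one_le_rpow ((Real.le_log_iff_exp_le ((Real.exp_pos 1).trans_le hexp)).2 hexp) hσ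

theorem mul_log_abs_le_mul_lnZ {c σ δ κ : ℝ} {n : ℤ} (hσ : 1 < σ) (hδ : 0 < δ) (hκ : 0 < κ)
    (hn : Real.exp ((κ / δ) ^ (1 / (σ - 1))) ≤ |(n : ℝ)|) :
    κ * Real.log |(n : ℝ)| ≤ δ * lnZ c σ n := by
  have habs : 0 < |(n : ℝ)| := (Real.exp_pos _).trans_le hn
  have hlog : Real.log |(n : ℝ)| ≤ Real.log (max c |(n : ℝ)|) :=
    Real.log_le_log habs (le_max_right _ _)
  calc κ * Real.log |(n : ℝ)| ≤ κ * Real.log (max c |(n : ℝ)|) := by gcongr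
    _ ≤ δ * lnZ c σ n :=
      mul_le_mul_rpow_of_rpow_one_div_le hσ hδ hκ
        (((Real.le_log_iff_exp_le habs).2 hn).trans hlog)

theorem full_dim_KAM_stmt9_general {σ δ c : ℝ} (hσ : 1 < σ) (hδ : 0 < δ)
    (hc : Real.exp 1 ≤ c) :
    Multipliable (fun n : ℤ => (1 - Real.exp (-δ * lnZ c σ n))⁻¹) ∧
    ∏' n : ℤ, (1 - Real.exp (-δ * lnZ c σ n))⁻¹
      ≤ Real.exp ((10 / δ) * Real.exp ((4 / δ) ^ (1 / (σ - 1)))) := by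
  simp only [neg_mul]
  exact multipliable_inv_one_sub_exp_neg_and_tprod_le hδ (Real.one_le_exp (by positivity))
    (fun n => le_mul_of_one_le_right hδ.le (one_le_lnZ hc (zero_le_one.trans hσ.le) n))
    fun n hn => mul_log_abs_le_mul_lnZ hσ hδ four_pos hn.le

/-- Lemma 5.7 of the paper. For `σ > 2` and `δ ∈ (0,1)`, the infinite product
`∏_{n∈ℤ} (1 − exp(−δ·ln^σ⌊n⌋))⁻¹` converges and is at most
`exp((18/δ)·exp((4/δ)^{1/(σ−1)}))`. -/
theorem full_dim_KAM_stmt9 (σ δ : ℝ) (hσ : 2 < σ) (hδ : δ ∈ Set.Ioo (0 : ℝ) 1)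
    (c : ℝ) (hc : Real.exp 1 ≤ c)
    (hsub : ∀ x y : ℝ, c ≤ y → y ≤ x →
      Real.log (x + y) ^ σ ≤ Real.log x ^ σ + (1 / 2) * Real.log y ^ σ) :
    Multipliable (fun n : ℤ => (1 - Real.exp (-δ * lnZ c σ n))⁻¹) ∧
    ∏' n : ℤ, (1 - Real.exp (-δ * lnZ c σ n))⁻¹
      ≤ Real.exp ((18 / δ) * Real.exp ((4 / δ) ^ (1 / (σ - 1)))) :=
  (full_dim_KAM_stmt9_general (one_lt_two.trans hσ) hδ.1 hc).imp_right fun h =>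
    h.trans (by have := hδ.1; gcongr; norm_num)
end

section
/- Let σ > 2, δ ∈ (0,1), p ∈ {1, 2}, and let a : ℤ → ℕ be finitely supported. Then Π_{n∈ℤ} (1 + a_n^p)·exp(−2δ·a_n·ln^σ⌊n⌋) ≤ exp( 3p·(p/δ)^{1/(σ−1)}·exp( (1/δ)^{1/σ} ) ). -/
/-!
Put `u = (1/δ)^(1/σ)`. Since `1 + xᵖ ≤ (1 + x)ᵖ` and `p ≤ 2`, the product is at most the `p`-th
power of `∏ (1 + aₙ)·exp(-tₙ aₙ)` with `tₙ = δ·ln^σ⌊n⌋ = (ln⌊n⌋ / u)^σ`, and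
`(1 + x)·exp(-t x) ≤ max{1, 1/t}`. If `|n| > exp u` then `tₙ ≥ 1` and the factor is at most `1`.
The subadditivity of `ln^σ` at `x = y = c` forces `ln c ≥ σ`, so each of the at most `3·exp u`
remaining factors is at most `max{1, (u / ln⌊n⌋)^σ} ≤ exp(σ u / ln⌊n⌋) ≤ exp u`.
-/

open Real

theorem prod_le_pow_card_filter {ι : Type*} {R : Type*} [CommSemiring R] [PartialOrder R]
    [IsOrderedRing R] (s : Finset ι) (P : ι → Prop) [DecidablePred P] {f : ι → R} {b : R}
    (hf : ∀ i ∈ s, 0 ≤ f i) (hb : ∀ i ∈ s, P i → f i ≤ b) (h_one : ∀ i ∈ s, ¬P i → f i ≤ 1) :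
    ∏ i ∈ s, f i ≤ b ^ (s.filter P).card := by
  calc ∏ i ∈ s, f i ≤ ∏ i ∈ s, if P i then b else 1 := by
        refine Finset.prod_le_prod hf fun i hi ↦ ?_
        split_ifs with hPi
        exacts [hb i hi hPi, h_one i hi hPi]
    _ = b ^ (s.filter P).card := by rw [← Finset.prod_filter, Finset.prod_const]

theorem card_filter_abs_le_two_mul_add_one {R : Type*} [Ring R] [LinearOrder R]
    [IsStrictOrderedRing R] [FloorRing R] (s : Finset ℤ) {r : R} (hr : 0 ≤ r) :
    ((s.filter fun n : ℤ ↦ |(n : R)| ≤ r).card : R) ≤ 2 * r + 1 := by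
  have h_subset : (s.filter fun n : ℤ ↦ |(n : R)| ≤ r) ⊆ Finset.Icc (-⌊r⌋) ⌊r⌋ := by
    intro n hn
    have h_abs : |n| ≤ ⌊r⌋ := Int.le_floor.2 (by exact_mod_cast (Finset.mem_filter.1 hn).2)
    exact Finset.mem_Icc.2 (abs_le.1 h_abs)
  have h_card : ((s.filter fun n : ℤ ↦ |(n : R)| ≤ r).card : ℤ) ≤ 2 * ⌊r⌋ + 1 := by
    have h_le := Finset.card_le_card h_subset
    have h_floor : 0 ≤ ⌊r⌋ := Int.floor_nonneg.2 hr
    rw [Int.card_Icc] at h_le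
    omega
  calc ((s.filter fun n : ℤ ↦ |(n : R)| ≤ r).card : R) ≤ 2 * ⌊r⌋ + 1 := by exact_mod_cast h_card
    _ ≤ 2 * r + 1 := by gcongr; exact Int.floor_le r

theorem one_add_mul_exp_neg_mul_le_max {t x : ℝ} (ht : 0 < t) (hx : 0 ≤ x) :
    (1 + x) * exp (-(t * x)) ≤ max 1 t⁻¹ := by
  rw [exp_neg, ← div_eq_mul_inv, div_le_iff₀ (exp_pos _)]
  rcases le_total 1 t with h | h
  · calc 1 + x ≤ exp x := by linarith [add_one_le_exp x]
      _ ≤ exp (t * x) := exp_le_exp.2 (le_mul_of_one_le_left hx h)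
      _ ≤ max 1 t⁻¹ * exp (t * x) := le_mul_of_one_le_left (exp_pos _).le (le_max_left _ _)
  · have h_exp : t * (1 + x) ≤ exp (t * x) := by linarith [add_one_le_exp (t * x)]
    calc 1 + x ≤ t⁻¹ * exp (t * x) := by rwa [le_inv_mul_iff₀ ht]
      _ ≤ max 1 t⁻¹ * exp (t * x) := by gcongr; exact le_max_right _ _

theorem rpow_div_le_exp {σ u l : ℝ} (hσ : 0 ≤ σ) (hu : 0 ≤ u) (hl : 0 < l) (hσl : σ ≤ l) :
    (u / l) ^ σ ≤ exp u := by
  calc (u / l) ^ σ ≤ exp (u / l) ^ σ := by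
        gcongr
        linarith [add_one_le_exp (u / l)]
    _ = exp (σ / l * u) := by rw [← exp_mul]; ring_nf
    _ ≤ exp u := exp_le_exp.2 (mul_le_of_le_one_left hu ((div_le_one hl).2 hσl))

theorem one_add_rpow_mul_exp_neg_le {p r x y : ℝ} (hp : 1 ≤ p) (hpr : p ≤ r) (hx : 0 ≤ x)
    (hy : 0 ≤ y) : (1 + x ^ p) * exp (-(r * y)) ≤ ((1 + x) * exp (-y)) ^ p := by
  have h_superadd : 1 + x ^ p ≤ (1 + x) ^ p := by
    simpa only [one_rpow] using add_rpow_le_rpow_add zero_le_one hx hp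
  rw [mul_rpow (by positivity) (exp_pos _).le, ← exp_mul]
  gcongr
  rw [neg_mul, neg_le_neg_iff, mul_comm]
  gcongr

theorem one_div_rpow_one_div_le {σ δ p : ℝ} (hσ : 1 < σ) (hδ : 0 < δ) (hδ_one : δ ≤ 1)
    (hp : 1 ≤ p) : (1 / δ) ^ (1 / σ) ≤ (p / δ) ^ (1 / (σ - 1)) := by
  have hσ_sub : 0 < σ - 1 := sub_pos.2 hσ
  calc (1 / δ) ^ (1 / σ) ≤ (1 / δ) ^ (1 / (σ - 1)) :=
        rpow_le_rpow_of_exponent_le ((one_le_div hδ).2 hδ_one)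
          (one_div_le_one_div_of_le hσ_sub (by linarith))
    _ ≤ (p / δ) ^ (1 / (σ - 1)) := by gcongr

theorem mul_log_le_of_log_mul_rpow_le {σ b c ε : ℝ} (hσ : 1 ≤ σ) (hb : 1 ≤ b) (hc : 1 < c)
    (h : log (b * c) ^ σ ≤ (1 + ε) * log c ^ σ) : σ * log b ≤ ε * log c := by
  have h_log : 0 < log c := log_pos hc
  have h_ratio : 0 ≤ log b / log c := div_nonneg (log_nonneg hb) h_log.le
  have h_split : log (b * c) = (1 + log b / log c) * log c := by
    rw [log_mul (by positivity) (by positivity)]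
    field_simp
    ring
  rw [h_split, mul_rpow (by positivity) h_log.le,
    mul_le_mul_iff_left₀ (rpow_pos_of_pos h_log σ)] at h
  have h_bernoulli : 1 + σ * (log b / log c) ≤ (1 + log b / log c) ^ σ :=
    one_add_mul_self_le_rpow_one_add (by linarith) hσ
  rw [← div_le_iff₀ h_log, mul_div_assoc]
  linarith

theorem exp_le_of_log_add_self_rpow_le {σ c : ℝ} (hσ : 1 ≤ σ) (hc : 1 < c)
    (h : log (c + c) ^ σ ≤ log c ^ σ + 1 / 2 * log c ^ σ) : exp σ ≤ c := by
  have h_two : σ * log 2 ≤ 1 / 2 * log c :=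
    mul_log_le_of_log_mul_rpow_le hσ one_le_two hc (by rw [two_mul]; linarith)
  rw [← le_log_iff_exp_le (by positivity)]
  nlinarith [log_two_gt_d9]

section LnZ

variable {σ c u : ℝ}

theorem le_log_max_abs (hc : exp σ ≤ c) (n : ℤ) : σ ≤ log (max c |(n : ℝ)|) := by
  have h_exp : exp σ ≤ max c |(n : ℝ)| := hc.trans (le_max_left _ _)
  exact (le_log_iff_exp_le ((exp_pos σ).trans_le h_exp)).2 h_exp

theorem lnZ_pos (hσ : 0 < σ) (hc : exp σ ≤ c) (n : ℤ) : 0 < lnZ c σ n :=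
  rpow_pos_of_pos (hσ.trans_le (le_log_max_abs hc n)) σ

theorem rpow_le_lnZ (c : ℝ) (hσ : 0 ≤ σ) (hu : 0 ≤ u) {n : ℤ} (hn : exp u ≤ |(n : ℝ)|) :
    u ^ σ ≤ lnZ c σ n := by
  have h_exp : exp u ≤ max c |(n : ℝ)| := hn.trans (le_max_right _ _)
  exact rpow_le_rpow hu ((le_log_iff_exp_le ((exp_pos u).trans_le h_exp)).2 h_exp) hσ

theorem rpow_div_lnZ_le_exp (hσ : 0 < σ) (hc : exp σ ≤ c) (hu : 0 ≤ u) (n : ℤ) :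
    u ^ σ / lnZ c σ n ≤ exp u := by
  have h_log : σ ≤ log (max c |(n : ℝ)|) := le_log_max_abs hc n
  have h_log_pos : 0 < log (max c |(n : ℝ)|) := hσ.trans_le h_log
  rw [lnZ, ← div_rpow hu h_log_pos.le]
  exact rpow_div_le_exp hσ.le hu h_log_pos h_log

theorem prod_one_add_mul_exp_neg_lnZ_le {δ : ℝ} (hσ : 0 < σ) (hδ : 0 < δ) (hc : exp σ ≤ c)
    (s : Finset ℤ) {a : ℤ → ℝ} (ha : ∀ n ∈ s, 0 ≤ a n) :
    ∏ n ∈ s, (1 + a n) * exp (-(δ * lnZ c σ n * a n))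
      ≤ exp (3 * (1 / δ) ^ (1 / σ) * exp ((1 / δ) ^ (1 / σ))) := by
  set u : ℝ := (1 / δ) ^ (1 / σ) with hu
  have hu_nonneg : 0 ≤ u := by positivity
  have hu_rpow : u ^ σ = δ⁻¹ := by
    rw [hu, one_div σ, rpow_inv_rpow (by positivity) hσ.ne', one_div]
  have h_factor (n : ℤ) (hn : n ∈ s) :
      (1 + a n) * exp (-(δ * lnZ c σ n * a n)) ≤ max 1 (u ^ σ / lnZ c σ n) := by
    rw [hu_rpow, div_eq_mul_inv, ← mul_inv]
    exact one_add_mul_exp_neg_mul_le_max (mul_pos hδ (lnZ_pos hσ hc n)) (ha n hn)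
  have h_near (n : ℤ) : max 1 (u ^ σ / lnZ c σ n) ≤ exp u :=
    max_le (one_le_exp hu_nonneg) (rpow_div_lnZ_le_exp hσ hc hu_nonneg n)
  have h_far (n : ℤ) (hn : ¬|(n : ℝ)| ≤ exp u) : max 1 (u ^ σ / lnZ c σ n) ≤ 1 :=
    max_le le_rfl <| (div_le_one (lnZ_pos hσ hc n)).2 <|
      rpow_le_lnZ c hσ.le hu_nonneg (not_le.1 hn).le
  have h_card : ((s.filter fun n : ℤ ↦ |(n : ℝ)| ≤ exp u).card : ℝ) ≤ 3 * exp u := by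
    linarith [card_filter_abs_le_two_mul_add_one s (exp_pos u).le, one_le_exp hu_nonneg]
  calc ∏ n ∈ s, (1 + a n) * exp (-(δ * lnZ c σ n * a n))
      ≤ exp u ^ (s.filter fun n : ℤ ↦ |(n : ℝ)| ≤ exp u).card :=
        prod_le_pow_card_filter s _
          (fun n hn ↦ mul_nonneg (add_nonneg zero_le_one (ha n hn)) (exp_pos _).le)
          (fun n hn _ ↦ (h_factor n hn).trans (h_near n))
          (fun n hn h ↦ (h_factor n hn).trans (h_far n h))
    _ = exp ((s.filter fun n : ℤ ↦ |(n : ℝ)| ≤ exp u).card * u) := (exp_nat_mul _ _).symm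
    _ ≤ exp (3 * exp u * u) := by gcongr
    _ = exp (3 * u * exp u) := by ring_nf

end LnZ

theorem full_dim_KAM_stmt10_general {σ δ c p r : ℝ} (hσ : 0 < σ) (hδ : 0 < δ) (hc : exp σ ≤ c)
    (hp : 1 ≤ p) (hpr : p ≤ r) (s : Finset ℤ) {a : ℤ → ℝ} (ha : ∀ n ∈ s, 0 ≤ a n) :
    ∏ n ∈ s, (1 + a n ^ p) * exp (-(r * δ) * a n * lnZ c σ n)
      ≤ exp (3 * p * (1 / δ) ^ (1 / σ) * exp ((1 / δ) ^ (1 / σ))) := by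
  have h_base (n : ℤ) (hn : n ∈ s) : 0 ≤ (1 + a n) * exp (-(δ * lnZ c σ n * a n)) :=
    mul_nonneg (add_nonneg zero_le_one (ha n hn)) (exp_pos _).le
  calc ∏ n ∈ s, (1 + a n ^ p) * exp (-(r * δ) * a n * lnZ c σ n)
      = ∏ n ∈ s, (1 + a n ^ p) * exp (-(r * (δ * lnZ c σ n * a n))) :=
        Finset.prod_congr rfl fun n _ ↦ by ring_nf
    _ ≤ ∏ n ∈ s, ((1 + a n) * exp (-(δ * lnZ c σ n * a n))) ^ p := by
        refine Finset.prod_le_prod (fun n hn ↦ ?_) fun n hn ↦ ?_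
        · have := rpow_nonneg (ha n hn) p
          positivity
        · exact one_add_rpow_mul_exp_neg_le hp hpr (ha n hn)
            (mul_nonneg (mul_pos hδ (lnZ_pos hσ hc n)).le (ha n hn))
    _ = (∏ n ∈ s, (1 + a n) * exp (-(δ * lnZ c σ n * a n))) ^ p := finsetProd_rpow s _ h_base p
    _ ≤ exp (3 * (1 / δ) ^ (1 / σ) * exp ((1 / δ) ^ (1 / σ))) ^ p := by
        gcongr
        · exact Finset.prod_nonneg h_base
        · exact prod_one_add_mul_exp_neg_lnZ_le hσ hδ hc s ha
    _ = exp (3 * p * (1 / δ) ^ (1 / σ) * exp ((1 / δ) ^ (1 / σ))) := by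
        rw [← exp_mul]
        ring_nf

/-- Lemma 5.8 of the paper. For `σ > 2`, `δ ∈ (0,1)`, `p ∈ {1,2}` and
finitely supported `a : ℤ → ℕ`,
`∏_{n∈ℤ} (1 + aₙᵖ)·exp(−2δ·aₙ·ln^σ⌊n⌋) ≤ exp(3p·(p/δ)^{1/(σ−1)}·exp((1/δ)^{1/σ}))`.
(All factors with `aₙ = 0` equal `1`, so the product is taken over the support of `a`.) -/
theorem full_dim_KAM_stmt10 (σ δ : ℝ) (hσ : 2 < σ) (hδ : δ ∈ Set.Ioo (0 : ℝ) 1)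
    (c : ℝ) (hc : Real.exp 1 ≤ c)
    (hsub : ∀ x y : ℝ, c ≤ y → y ≤ x →
      Real.log (x + y) ^ σ ≤ Real.log x ^ σ + (1 / 2) * Real.log y ^ σ)
    (p : ℕ) (hp : p = 1 ∨ p = 2) (a : ℤ →₀ ℕ) :
    ∏ n ∈ a.support, (1 + (a n : ℝ) ^ p) * Real.exp (-(2 * δ) * (a n : ℝ) * lnZ c σ n)
      ≤ Real.exp (3 * p * ((p : ℝ) / δ) ^ (1 / (σ - 1)) * Real.exp ((1 / δ) ^ (1 / σ))) := by
  have hp_one : (1 : ℝ) ≤ p := by rcases hp with rfl | rfl <;> norm_num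
  have hp_two : (p : ℝ) ≤ 2 := by rcases hp with rfl | rfl <;> norm_num
  have hc_exp : exp σ ≤ c := exp_le_of_log_add_self_rpow_le (by linarith)
    ((one_lt_exp_iff.2 one_pos).trans_le hc) (hsub c c le_rfl le_rfl)
  calc ∏ n ∈ a.support, (1 + (a n : ℝ) ^ p) * exp (-(2 * δ) * (a n : ℝ) * lnZ c σ n)
      ≤ exp (3 * p * (1 / δ) ^ (1 / σ) * exp ((1 / δ) ^ (1 / σ))) := by
        simpa only [rpow_natCast] using full_dim_KAM_stmt10_general (by linarith) hδ.1 hc_exp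
          hp_one hp_two a.support (a := fun n ↦ (a n : ℝ)) fun n _ ↦ Nat.cast_nonneg (a n)
    _ ≤ exp (3 * p * ((p : ℝ) / δ) ^ (1 / (σ - 1)) * exp ((1 / δ) ^ (1 / σ))) := by
        gcongr
        exact one_div_rpow_one_div_le (by linarith) hδ.1 hδ.2.le hp_one
end

section
/- Let σ > 2 and δ ∈ (0,1). Then for every finitely supported l : ℤ → ℤ, one has Π_{n∈ℤ} (1 + l_n²·⟨n⟩⁴) ≤ exp( (1000/δ)·exp( 4·(50/δ)^{1/(σ−1)} ) ) · exp( δ·Σ_{n∈ℤ} |l_n|·ln^σ⌊n⌋ ). -/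
/-- `⟨n⟩ = max{1, |n|}` for an integer `n`, as a real number. -/
def bra (n : ℤ) : ℝ := max 1 |(n : ℝ)|

/-!
With `k = l n`, `m = ⟨n⟩` and `L = log ⌊n⌋ ≥ max 1 (log m)`, the logarithm of a factor is at most
`1 + 2 log |k| + 4 log m`, to be paid for by `δ |k| L ^ σ`. At a high mode, `50 / δ ≤ L ^ (σ - 1)`,
it is at most `6 |k| L ≤ δ |k| L ^ σ`, so nothing is lost. At a low mode,
`L < A := (50 / δ) ^ (1 / (σ - 1))`, the term `2 log |k|` is still paid for, up to `4 / δ`, and what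
is left is `O(A / δ)`. Since a low mode has `|n| < exp A`, there are at most `3 exp A` of them.
-/

lemma log_one_add_le_one_add_log {x : ℝ} (hx : 1 ≤ x) : Real.log (1 + x) ≤ 1 + Real.log x := by
  have log_two_le : Real.log 2 ≤ 1 := by linarith [Real.log_le_sub_one_of_pos (zero_lt_two' ℝ)]
  calc Real.log (1 + x) ≤ Real.log (2 * x) := Real.log_le_log (by linarith) (by linarith)
    _ = Real.log 2 + Real.log x := Real.log_mul two_ne_zero (by linarith)
    _ ≤ 1 + Real.log x := by gcongr

lemma log_one_add_sq_mul_pow_four_le {k m : ℝ} (hk : 1 ≤ |k|) (hm : 1 ≤ m) :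
    Real.log (1 + k ^ 2 * m ^ 4) ≤ 1 + 2 * Real.log |k| + 4 * Real.log m := by
  have hprod : 1 ≤ |k| ^ 2 * m ^ 4 := one_le_mul_of_one_le_of_one_le (one_le_pow₀ hk)
    (one_le_pow₀ hm)
  calc Real.log (1 + k ^ 2 * m ^ 4) = Real.log (1 + |k| ^ 2 * m ^ 4) := by rw [sq_abs]
    _ ≤ 1 + Real.log (|k| ^ 2 * m ^ 4) := log_one_add_le_one_add_log hprod
    _ = 1 + 2 * Real.log |k| + 4 * Real.log m := by
      rw [Real.log_mul (by positivity) (by positivity), Real.log_pow, Real.log_pow]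
      push_cast
      ring

lemma log_le_mul_add_inv_sub_two {x ε : ℝ} (hx : 0 < x) (hε : 0 < ε) :
    Real.log x ≤ ε * x + ε⁻¹ - 2 := by
  have hsplit : Real.log x = Real.log (ε * x) + Real.log ε⁻¹ := by
    rw [Real.log_mul hε.ne' hx.ne', Real.log_inv]
    ring
  linarith [Real.log_le_sub_one_of_pos (mul_pos hε hx),
    Real.log_le_sub_one_of_pos (inv_pos.mpr hε)]

section SingleFactor

variable {k m L σ δ : ℝ}

lemma one_add_sq_mul_pow_four_le_exp_of_six_le (hk : 1 ≤ |k|) (hm : 1 ≤ m) (hL : 1 ≤ L)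
    (hmL : Real.log m ≤ L) (hδL : 6 ≤ δ * L ^ (σ - 1)) :
    1 + k ^ 2 * m ^ 4 ≤ Real.exp (δ * (|k| * L ^ σ)) := by
  rw [← Real.log_le_iff_le_exp (by positivity)]
  have hlogk : Real.log |k| ≤ |k| - 1 := Real.log_le_sub_one_of_pos (by linarith)
  have hkL : |k| ≤ |k| * L := le_mul_of_one_le_right (abs_nonneg k) hL
  have hLk : L ≤ |k| * L := le_mul_of_one_le_left (by linarith) hk
  calc Real.log (1 + k ^ 2 * m ^ 4) ≤ 1 + 2 * Real.log |k| + 4 * Real.log m :=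
        log_one_add_sq_mul_pow_four_le hk hm
    _ ≤ 6 * (|k| * L) := by linarith
    _ ≤ δ * L ^ (σ - 1) * (|k| * L) := by gcongr
    _ = δ * (|k| * L ^ σ) := by
      rw [Real.rpow_sub_one (by positivity)]
      field_simp

lemma one_add_sq_mul_pow_four_le_exp_add (hσ : 0 ≤ σ) (hδ : 0 < δ) (hk : 1 ≤ |k|) (hm : 1 ≤ m)
    (hL : 1 ≤ L) (hmL : Real.log m ≤ L) :
    1 + k ^ 2 * m ^ 4 ≤ Real.exp (δ * (|k| * L ^ σ) + (4 * L + 4 / δ)) := by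
  rw [← Real.log_le_iff_le_exp (by positivity)]
  have hlogk : 2 * Real.log |k| ≤ δ * |k| + 4 / δ - 4 :=
    calc 2 * Real.log |k| ≤ 2 * (δ / 2 * |k| + (δ / 2)⁻¹ - 2) := by
          gcongr
          exact log_le_mul_add_inv_sub_two (by linarith) (by positivity)
      _ = δ * |k| + 4 / δ - 4 := by
        field_simp
        ring
  have hweight : δ * |k| ≤ δ * (|k| * L ^ σ) := by
    gcongr
    exact le_mul_of_one_le_right (abs_nonneg k) (Real.one_le_rpow hL hσ)
  linarith [log_one_add_sq_mul_pow_four_le hk hm]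

end SingleFactor

lemma prod_le_exp_card_mul_mul_exp_sum {ι : Type*} (s : Finset ι) (p : ι → Prop) [DecidablePred p]
    {f w : ι → ℝ} {R : ℝ} (hf : ∀ i ∈ s, 0 ≤ f i)
    (hp : ∀ i ∈ s, p i → f i ≤ Real.exp (w i + R)) (hnp : ∀ i ∈ s, ¬p i → f i ≤ Real.exp (w i)) :
    ∏ i ∈ s, f i ≤ Real.exp ((s.filter p).card * R) * Real.exp (∑ i ∈ s, w i) := by
  have hbound : ∀ i ∈ s, f i ≤ Real.exp (w i + if p i then R else 0) := by
    intro i hi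
    split_ifs with h
    · exact hp i hi h
    · simpa only [add_zero] using hnp i hi h
  calc ∏ i ∈ s, f i ≤ ∏ i ∈ s, Real.exp (w i + if p i then R else 0) :=
        Finset.prod_le_prod hf hbound
    _ = Real.exp ((s.filter p).card * R) * Real.exp (∑ i ∈ s, w i) := by
      rw [← Real.exp_sum, ← Real.exp_add, Finset.sum_add_distrib, ← Finset.sum_filter,
        Finset.sum_const, nsmul_eq_mul, add_comm]

lemma card_filter_abs_le_le (s : Finset ℤ) {r : ℝ} (hr : 0 ≤ r) :
    ((s.filter fun n : ℤ => |(n : ℝ)| ≤ r).card : ℝ) ≤ 2 * r + 1 := by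
  have hsubset : (s.filter fun n : ℤ => |(n : ℝ)| ≤ r) ⊆ Finset.Icc (-⌊r⌋) ⌊r⌋ := by
    intro n hn
    rw [Finset.mem_Icc, ← abs_le, Int.le_floor, Int.cast_abs]
    exact (Finset.mem_filter.mp hn).2
  have hIcc : ((Finset.Icc (-⌊r⌋) ⌊r⌋).card : ℤ) = 2 * ⌊r⌋ + 1 := by
    have hfloor : 0 ≤ ⌊r⌋ := Int.floor_nonneg.mpr hr
    rw [Int.card_Icc]
    omega
  calc ((s.filter fun n : ℤ => |(n : ℝ)| ≤ r).card : ℝ)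
      ≤ ((Finset.Icc (-⌊r⌋) ⌊r⌋).card : ℝ) := by exact_mod_cast Finset.card_le_card hsubset
    _ = 2 * (⌊r⌋ : ℝ) + 1 := by exact_mod_cast hIcc
    _ ≤ 2 * r + 1 := by linarith [Int.floor_le r]

lemma one_le_bra (n : ℤ) : 1 ≤ bra n :=
  le_max_left _ _

section Weight

variable {c : ℝ} (hc : Real.exp 1 ≤ c)
include hc

lemma one_le_log_max (x : ℝ) : 1 ≤ Real.log (max c x) := by
  have hexp : Real.exp 1 ≤ max c x := hc.trans (le_max_left c x)
  exact (Real.le_log_iff_exp_le ((Real.exp_pos 1).trans_le hexp)).mpr hexp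

lemma log_bra_le_log_max (n : ℤ) : Real.log (bra n) ≤ Real.log (max c |(n : ℝ)|) :=
  Real.log_le_log (zero_lt_one.trans_le (one_le_bra n))
    (max_le_max_right _ ((Real.one_le_exp zero_le_one).trans hc))

lemma lnZ_lt_iff {τ y : ℝ} (hτ : 0 < τ) (hy : 0 ≤ y) (n : ℤ) :
    lnZ c τ n < y ↔ Real.log (max c |(n : ℝ)|) < y ^ (1 / τ) := by
  have hlog : 0 ≤ Real.log (max c |(n : ℝ)|) := zero_le_one.trans (one_le_log_max hc _)
  rw [one_div, Real.lt_rpow_inv_iff_of_pos hlog hy hτ, lnZ]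

lemma card_filter_lnZ_lt_le (s : Finset ℤ) {τ y : ℝ} (hτ : 0 < τ) (hy : 0 ≤ y) :
    ((s.filter fun n => lnZ c τ n < y).card : ℝ) ≤ 3 * Real.exp (y ^ (1 / τ)) := by
  have habs_le : ∀ n : ℤ, lnZ c τ n < y → |(n : ℝ)| ≤ Real.exp (y ^ (1 / τ)) := by
    intro n hn
    have hmax_pos : 0 < max c |(n : ℝ)| := lt_max_of_lt_left ((Real.exp_pos 1).trans_le hc)
    exact (le_max_right _ _).trans
      ((Real.log_le_iff_le_exp hmax_pos).mp ((lnZ_lt_iff hc hτ hy n).mp hn).le)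
  have hone : 1 ≤ Real.exp (y ^ (1 / τ)) := Real.one_le_exp (Real.rpow_nonneg hy _)
  calc ((s.filter fun n => lnZ c τ n < y).card : ℝ)
      ≤ ((s.filter fun n : ℤ => |(n : ℝ)| ≤ Real.exp (y ^ (1 / τ))).card : ℝ) := by
        exact_mod_cast Finset.card_le_card (Finset.monotone_filter_right s fun n _ => habs_le n)
    _ ≤ 2 * Real.exp (y ^ (1 / τ)) + 1 := card_filter_abs_le_le s (Real.exp_pos _).le
    _ ≤ 3 * Real.exp (y ^ (1 / τ)) := by linarith

lemma low_mode_loss_le {σ δ : ℝ} (hσ : 1 < σ) (hδ : 0 < δ) {n : ℤ}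
    (hn : lnZ c (σ - 1) n < 50 / δ) :
    4 * Real.log (max c |(n : ℝ)|) + 4 / δ ≤ 204 / δ * (50 / δ) ^ (1 / (σ - 1)) := by
  set A : ℝ := (50 / δ) ^ (1 / (σ - 1))
  have hL : 1 ≤ Real.log (max c |(n : ℝ)|) := one_le_log_max hc _
  have hLA : Real.log (max c |(n : ℝ)|) < A :=
    (lnZ_lt_iff hc (sub_pos.mpr hσ) (by positivity) n).mp hn
  have hδ50 : 1 ≤ 50 / δ := (Real.one_le_rpow hL (sub_nonneg.mpr hσ.le)).trans hn.le
  calc 4 * Real.log (max c |(n : ℝ)|) + 4 / δ ≤ 4 * (50 / δ * A) + 4 / δ * A := by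
        gcongr
        · exact hLA.le.trans (le_mul_of_one_le_left (by linarith) hδ50)
        · exact le_mul_of_one_le_right (by positivity) (hL.trans hLA.le)
    _ = 204 / δ * A := by ring

end Weight

lemma three_mul_exp_mul_le {A δ : ℝ} (hA : 0 ≤ A) (hδ : 0 < δ) :
    3 * Real.exp A * (204 / δ * A) ≤ 1000 / δ * Real.exp (4 * A) := by
  have hAexp : A ≤ Real.exp A := by linarith [Real.add_one_le_exp A]
  calc 3 * Real.exp A * (204 / δ * A) ≤ 3 * Real.exp A * (204 / δ * Real.exp A) := by gcongr
    _ = 612 / δ * Real.exp (2 * A) := by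
      rw [two_mul, Real.exp_add]
      ring
    _ ≤ 1000 / δ * Real.exp (4 * A) := by
      gcongr <;> norm_num

theorem full_dim_KAM_stmt13_general {σ δ c : ℝ} (hσ : 1 < σ) (hδ : 0 < δ) (hc : Real.exp 1 ≤ c)
    (s : Finset ℤ) (l : ℤ → ℝ) (hl : ∀ n ∈ s, 1 ≤ |l n|) :
    ∏ n ∈ s, (1 + l n ^ 2 * bra n ^ 4)
      ≤ Real.exp ((1000 / δ) * Real.exp (4 * (50 / δ) ^ (1 / (σ - 1)))) *
        Real.exp (δ * ∑ n ∈ s, |l n| * lnZ c σ n) := by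
  set A : ℝ := (50 / δ) ^ (1 / (σ - 1))
  have hlow : ∀ n ∈ s, lnZ c (σ - 1) n < 50 / δ →
      1 + l n ^ 2 * bra n ^ 4 ≤ Real.exp (δ * (|l n| * lnZ c σ n) + 204 / δ * A) := by
    intro n hn hnlow
    refine (one_add_sq_mul_pow_four_le_exp_add (zero_le_one.trans hσ.le) hδ (hl n hn)
      (one_le_bra n) (one_le_log_max hc _) (log_bra_le_log_max hc n)).trans ?_
    rw [lnZ]
    gcongr
    exact low_mode_loss_le hc hσ hδ hnlow
  have hhigh : ∀ n ∈ s, ¬lnZ c (σ - 1) n < 50 / δ →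
      1 + l n ^ 2 * bra n ^ 4 ≤ Real.exp (δ * (|l n| * lnZ c σ n)) := by
    intro n hn hnhigh
    have hδL : 50 ≤ δ * lnZ c (σ - 1) n := (div_le_iff₀' hδ).mp (not_lt.mp hnhigh)
    exact one_add_sq_mul_pow_four_le_exp_of_six_le (hl n hn) (one_le_bra n) (one_le_log_max hc _)
      (log_bra_le_log_max hc n) (le_trans (by norm_num) hδL)
  have hloss : ((s.filter fun n => lnZ c (σ - 1) n < 50 / δ).card : ℝ) * (204 / δ * A) ≤
      1000 / δ * Real.exp (4 * A) :=
    (mul_le_mul_of_nonneg_right (card_filter_lnZ_lt_le hc s (sub_pos.mpr hσ) (by positivity))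
      (by positivity)).trans (three_mul_exp_mul_le (by positivity) hδ)
  refine (prod_le_exp_card_mul_mul_exp_sum s _ (fun n _ => by positivity) hlow hhigh).trans ?_
  rw [Finset.mul_sum]
  gcongr

/-- key analytic estimate in the proof of Lemma 3.2 of the paper.
For every finitely supported `l : ℤ → ℤ`,
`∏ₙ (1 + lₙ²·⟨n⟩⁴) ≤ exp((1000/δ)·exp(4·(50/δ)^{1/(σ−1)})) · exp(δ·∑ₙ |lₙ|·ln^σ⌊n⌋)`.
(All factors with `lₙ = 0` equal `1`, so the product is taken over the support of `l`.) -/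
theorem full_dim_KAM_stmt13 (σ δ : ℝ) (hσ : 2 < σ) (hδ : δ ∈ Set.Ioo (0 : ℝ) 1)
    (c : ℝ) (hc : Real.exp 1 ≤ c)
    (hsub : ∀ x y : ℝ, c ≤ y → y ≤ x →
      Real.log (x + y) ^ σ ≤ Real.log x ^ σ + (1 / 2) * Real.log y ^ σ)
    (l : ℤ →₀ ℤ) :
    ∏ n ∈ l.support, (1 + (l n : ℝ) ^ 2 * bra n ^ 4)
      ≤ Real.exp ((1000 / δ) * Real.exp (4 * (50 / δ) ^ (1 / (σ - 1)))) *
        Real.exp (δ * ∑ n ∈ l.support, (|l n| : ℝ) * lnZ c σ n) := by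
  exact full_dim_KAM_stmt13_general (by linarith) hδ.1 hc l.support (fun n => l n) fun n hn => by
    exact_mod_cast Int.one_le_abs (Finsupp.mem_support_iff.mp hn)
end
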